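/- Let n ≥ 2 and a = (a_1,…,a_n) ∈ ℂ^n with each a_j purely imaginary, let σ ∈ ℂ with Re(σ) > 0, and let p_1,…,p_{n−1} ∈ ℂ with Re(p_j) > 0 for all j; set p_n := −|a|. Then U_{n,a}(p_1,…,p_{n−1}) = [Γ_ℝ(p_1+σ) / ∏_{j=1}^{n} Γ_ℝ(σ−a_j)] · (1/(4πi)^{n−1})·∫_{q_1,…,q_{n−1}} U_{n,a}(q_1,…,q_{n−1})·∏_{j=1}^{n−1} Γ_ℝ(p_j−q_j)·Γ_ℝ(p_{j+1}−q_j+σ) dq_1⋯dq_{n−1}. -/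

import Mathlib

open MeasureTheory Complex

noncomputable section

/-- `Γ_ℝ(s) = π^{-s/2} Γ(s/2)`. -/
def GammaR (s : ℂ) : ℂ := (Real.pi : ℂ) ^ (-s / 2) * Complex.Gamma (s / 2)

/-- Modified Bessel function of the second kind, via its integral representation. -/
def BesselK (ν : ℂ) (y : ℝ) : ℂ :=
  (1 / 2) * ∫ t in Set.Ioi (0 : ℝ),
    Complex.exp (-((y : ℂ) / 2) * ((t : ℂ) + 1 / (t : ℂ))) * (t : ℂ) ^ ν / (t : ℂ)

/-- Extend a finite real tuple to `ℕ`, defaulting to `1`. -/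
def extR {k : ℕ} (t : Fin k → ℝ) : ℕ → ℝ := fun i => if h : i < k then t ⟨i, h⟩ else 1

/-- Extend a finite real tuple to `ℕ`, defaulting to `0`. -/
def extR0 {k : ℕ} (t : Fin k → ℝ) : ℕ → ℝ := fun i => if h : i < k then t ⟨i, h⟩ else 0

/-- The positive orthant. -/
def posSet (k : ℕ) : Set (Fin k → ℝ) := {t | ∀ j, 0 < t j}

/-- `|a| = a_1 + ⋯ + a_n` (0-based indexing). -/
def sumA (n : ℕ) (a : ℕ → ℂ) : ℂ := ∑ j ∈ Finset.range n, a j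

/-- `ã_j = a_{j+1} + a_1/(n-1)` (0-based indexing). -/
def tildeA (n : ℕ) (a : ℕ → ℂ) : ℕ → ℂ := fun j => a (j + 1) + a 0 / ((n : ℂ) - 1)

/-- The normalized radial part `Ŵ^A_{n,a}` of the class one `GL_n(ℝ)` Whittaker function,
as a function of `(y_1,…,y_{n-1})` (0-based indexing). -/
def WhittAr : ℕ → (ℕ → ℂ) → (ℕ → ℝ) → ℂ
  | 0, _, _ => 1
  | 1, _, _ => 1
  | 2, a, y => 2 * ((y 0 : ℂ) ^ ((a 0 + a 1) / 2)) *
      BesselK ((a 0 - a 1) / 2) (2 * Real.pi * y 0)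
  | (n + 3), a, y =>
      ∫ t in posSet (n + 2),
        WhittAr (n + 2) (tildeA (n + 3) a)
            (fun j => y (j + 1) * Real.sqrt (extR t (j + 1) / extR t j)) *
          (∏ j ∈ Finset.range (n + 2),
            Complex.exp (((-(Real.pi * y j) ^ 2 * extR t j - 1 / extR t j : ℝ) : ℂ)) *
              ((Real.pi * y j : ℝ) : ℂ) ^ ((((n + 2 - j : ℕ) : ℂ) * a 0) / ((n + 2 : ℕ) : ℂ)) *
              ((extR t j : ℝ) : ℂ) ^ ((((n + 3 : ℕ) : ℂ) * a 0) / (2 * ((n + 2 : ℕ) : ℂ)))) *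
          ((Real.pi * extR t (n + 1) : ℝ) : ℂ) ^ (-(sumA (n + 3) a) / 2) *
          (∏ j ∈ Finset.range (n + 2), ((extR t j : ℝ) : ℂ))⁻¹

/-- `Ŵ^A_{n,a}` as a function of the full tuple `(y_1,…,y_n)`. -/
def WhittAhat (n : ℕ) (a : ℕ → ℂ) (y : ℕ → ℝ) : ℂ :=
  ((y (n - 1) : ℝ) : ℂ) ^ sumA n a * WhittAr n a y

/-- The Mellin transform `U_{n,a}` (0-based: `s j` stands for `s_{j+1}`). -/
def Ufun (n : ℕ) (a : ℕ → ℂ) (s : ℕ → ℂ) : ℂ :=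
  ∫ y in posSet (n - 1),
    WhittAr n a (extR y) *
      ∏ j ∈ Finset.range (n - 1), ((extR y j : ℝ) : ℂ) ^ s j / ((extR y j : ℝ) : ℂ)

/-- The normalized radial part `Ŵ^B_{n,b}` of the class one `SO_{2n+1}(ℝ)` Whittaker function. -/
def WhittBr : ℕ → (ℕ → ℂ) → (ℕ → ℝ) → ℂ
  | 0, _, _ => 1
  | 1, b, y => 2 * BesselK (b 0 / 2) (2 * Real.pi * y 0)
  | (n + 2), b, y =>
      ∫ p in (posSet (n + 2) ×ˢ posSet (n + 1)),
        WhittBr (n + 1) b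
            (fun j =>
              if j < n then
                y (j + 1) *
                  Real.sqrt (extR p.1 (j + 1) * extR p.2 (j + 1) /
                    (extR p.1 (j + 2) * extR p.2 j))
              else y (n + 1) * Real.sqrt (extR p.1 (n + 1) / extR p.2 n)) *
          (∏ j ∈ Finset.range (n + 2),
            Complex.exp (((-(Real.pi * y j) ^ 2 * extR p.1 j - 1 / extR p.1 j : ℝ) : ℂ)) *
              ((Real.pi * y j : ℝ) : ℂ) ^ b (n + 1)) *
          (∏ j ∈ Finset.range (n + 1),
            Complex.exp (((-(Real.pi * y j) ^ 2 * (extR p.1 j / extR p.1 (j + 1)) * extR p.2 j -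
                  1 / extR p.2 j : ℝ) : ℂ)) *
              ((extR p.1 (j + 1) * extR p.2 j : ℝ) : ℂ) ^ (b (n + 1) / 2)) *
          ((extR p.1 0 : ℝ) : ℂ) ^ b (n + 1) *
          (∏ j ∈ Finset.range (n + 1), ((extR p.2 j : ℝ) : ℂ))⁻¹ *
          (∏ j ∈ Finset.range (n + 2), ((extR p.1 j : ℝ) : ℂ))⁻¹

/-- The Mellin transform `V_{n,b}` (0-based: `s j` stands for `s_{j+1}`). -/
def Vfun (n : ℕ) (b : ℕ → ℂ) (s : ℕ → ℂ) : ℂ :=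
  ∫ y in posSet n,
    WhittBr n b (extR y) *
      ∏ j ∈ Finset.range n, ((extR y j : ℝ) : ℂ) ^ s j / ((extR y j : ℝ) : ℂ)

/-- Integral over the vertical line `Re z = c`, i.e. `i·∫_ℝ f(c+it) dt`. -/
def VInt (c : ℝ) (f : ℂ → ℂ) : ℂ := Complex.I * ∫ t : ℝ, f (c + t * Complex.I)

/-- Iterated integral over `k` vertical lines with abscissas `c 0, …, c (k-1)`;
the integrand is fed the contour points as a 0-based sequence. -/
def VIntK (k : ℕ) (c : ℕ → ℝ) (f : (ℕ → ℂ) → ℂ) : ℂ :=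
  Complex.I ^ k * ∫ t : Fin k → ℝ, f (fun i => (c i : ℂ) + (extR0 t i : ℝ) * Complex.I)



/-- The extension of `p_1,…,p_{n-1}` by the conventions `p_0 = 0`, `p_n = -|a|`
(1-based indexing). -/
def PextL (n : ℕ) (a : ℕ → ℂ) (p : ℕ → ℂ) : ℕ → ℂ :=
  fun i => if i = 0 then 0 else if i ≤ n - 1 then p (i - 1) else -sumA n a

/-!
Write `Γ` for `Γ_ℝ`. Replace the rank `n - 1` Whittaker function in the recursion by its Mellin
inversion integral over `z` on vertical lines. The integral over the `t_j` then splits into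
`K`-Bessel kernels `2 y^{-(A+B)/2} K_{(A-B)/2}(2πy)`, whose Mellin transforms are
`Γ(s - A) Γ(s - B) / 2`. This gives a formula for `U_{n,a}(s)` as an integral over `z` of
`U_{n-1,ã}(z)` times Gamma factors in `s` and `z`, and shows that Mellin inversion holds in
rank `n`.

Insert this formula for `U_{n,a}(q)` on the right of the identity. Each `q_j` then occurs in four
Gamma factors, and Barnes' first lemma integrates it out; what remains is an integral of
`U_{n-1,ã}(z)` against quotients of Gamma factors. On the left, insert the formula for `U_{n,a}(p)`,
replace `U_{n-1,ã}` by the right side of its own identity, and apply Barnes' first lemma in the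
outer variables. The two integrands agree at every point because the quotients telescope.
-/

open scoped Topology

/-! ### The Gamma function on vertical lines -/

@[fun_prop]
lemma measurable_Gamma : Measurable Gamma := by
  have h := differentiable_one_div_Gamma.continuous.measurable.fun_inv
  simpa only [one_div, inv_inv] using h

@[fun_prop]
lemma measurable_Gammaℝ : Measurable Gammaℝ := by
  have h := differentiable_Gammaℝ_inv.continuous.measurable.fun_inv
  simpa only [inv_inv] using h

lemma norm_Gamma_le_Gamma_re {s : ℂ} (hs : 0 < s.re) : ‖Gamma s‖ ≤ Real.Gamma s.re := by
  rw [Gamma_eq_integral hs, Real.Gamma_eq_integral hs, GammaIntegral]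
  refine (norm_integral_le_integral_norm _).trans_eq ?_
  refine setIntegral_congr_fun measurableSet_Ioi fun x hx => ?_
  rw [norm_mul, norm_real, Real.norm_eq_abs, Real.abs_exp, norm_cpow_eq_rpow_re_of_pos hx,
    sub_re, one_re]

lemma norm_Gammaℝ_le {s : ℂ} (hs : 0 < s.re) : ‖Gammaℝ s‖ ≤ ‖Gammaℝ s.re‖ := by
  have hre : (s / 2).re = s.re / 2 := by simp
  have hGamma : ‖Gamma (s / 2)‖ ≤ ‖Gamma ((s.re : ℂ) / 2)‖ := by
    refine (norm_Gamma_le_Gamma_re (by rw [hre]; positivity)).trans ?_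
    rw [hre, ← ofReal_ofNat, ← ofReal_div, Gamma_ofReal, norm_real]
    exact le_abs_self _
  have hpow : (-s / 2).re = (-(s.re : ℂ) / 2).re := by simp
  rw [Gammaℝ_def, Gammaℝ_def, norm_mul, norm_mul, norm_cpow_eq_rpow_re_of_pos Real.pi_pos,
    norm_cpow_eq_rpow_re_of_pos Real.pi_pos, hpow]
  gcongr

lemma min_mul_one_add_sq_le_norm_mul_norm_add_one {s : ℂ} (hs : 0 < s.re) :
    min (s.re ^ 2) 1 * (1 + s.im ^ 2) ≤ ‖s‖ * ‖s + 1‖ := by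
  have hle : ‖s‖ ≤ ‖s + 1‖ := by
    rw [← sq_le_sq₀ (norm_nonneg _) (norm_nonneg _), ← normSq_eq_norm_sq, ← normSq_eq_norm_sq,
      normSq_apply, normSq_apply, add_re, add_im, one_re, one_im]
    nlinarith
  calc min (s.re ^ 2) 1 * (1 + s.im ^ 2) ≤ s.re ^ 2 + s.im ^ 2 := by
        nlinarith [min_le_left (s.re ^ 2) 1, min_le_right (s.re ^ 2) 1, sq_nonneg s.im]
    _ = ‖s‖ * ‖s‖ := by rw [← sq, ← normSq_eq_norm_sq, normSq_apply]; ring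
    _ ≤ ‖s‖ * ‖s + 1‖ := by gcongr

lemma norm_Gamma_le_mul_inv_one_add_sq {s : ℂ} (hs : 0 < s.re) :
    ‖Gamma s‖ ≤ Real.Gamma (s.re + 2) / min (s.re ^ 2) 1 * (1 + s.im ^ 2)⁻¹ := by
  have hs0 : s ≠ 0 := fun h => by simp [h] at hs
  have hre1 : 0 < (s + 1).re := by rw [add_re, one_re]; positivity
  have hs1 : s + 1 ≠ 0 := fun h => by simp [h] at hre1
  have hm : 0 < min (s.re ^ 2) 1 := by positivity
  have hGamma : ‖s‖ * ‖s + 1‖ * ‖Gamma s‖ ≤ Real.Gamma (s.re + 2) := by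
    have hre : (s + 1 + 1).re = s.re + 2 := by simp only [add_re, one_re]; ring
    have h := norm_Gamma_le_Gamma_re (s := s + 1 + 1) (by rw [hre]; positivity)
    rw [Gamma_add_one _ hs1, Gamma_add_one _ hs0, norm_mul, norm_mul, hre] at h
    linarith
  rw [div_mul_eq_mul_div, le_div_iff₀ hm, ← div_eq_mul_inv, le_div_iff₀ (by positivity)]
  calc ‖Gamma s‖ * min (s.re ^ 2) 1 * (1 + s.im ^ 2)
      = min (s.re ^ 2) 1 * (1 + s.im ^ 2) * ‖Gamma s‖ := by ring
    _ ≤ ‖s‖ * ‖s + 1‖ * ‖Gamma s‖ :=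
        mul_le_mul_of_nonneg_right (min_mul_one_add_sq_le_norm_mul_norm_add_one hs) (norm_nonneg _)
    _ ≤ Real.Gamma (s.re + 2) := hGamma

lemma integrable_Gamma_vertical {z : ℂ} (hz : 0 < z.re) :
    Integrable fun t : ℝ => Gamma (z + t * I) := by
  have hre (t : ℝ) : (z + t * I).re = z.re := by simp
  have him (t : ℝ) : (z + t * I).im = z.im + t := by simp
  refine ((integrable_inv_one_add_sq.comp_add_left z.im).const_mul
    (Real.Gamma (z.re + 2) / min (z.re ^ 2) 1)).mono'
    (measurable_Gamma.comp (by fun_prop)).aestronglyMeasurable (.of_forall fun t => ?_)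
  simpa only [hre, him] using norm_Gamma_le_mul_inv_one_add_sq (s := z + t * I) (by rwa [hre])

lemma integrable_Gammaℝ_vertical {z : ℂ} (hz : 0 < z.re) :
    Integrable fun t : ℝ => Gammaℝ (z + t * I) := by
  have hz2 : 0 < (z / 2).re := by simpa using hz
  refine (((integrable_Gamma_vertical hz2).comp_div two_ne_zero).bdd_mul
    (f := fun t : ℝ => (Real.pi : ℂ) ^ (-(z + t * I) / 2)) (c := Real.pi ^ (-z.re / 2))
    (Measurable.aestronglyMeasurable (by fun_prop)) (.of_forall fun t => ?_)).congr
    (.of_forall fun t => ?_)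
  · rw [norm_cpow_eq_rpow_re_of_pos Real.pi_pos]
    simp
  · simp only [Gammaℝ_def]
    congr 2
    push_cast
    ring

lemma integrable_Gamma_mul_Gamma_vertical {z w : ℂ} (hz : 0 < z.re) (hw : 0 < w.re) :
    Integrable fun t : ℝ => Gamma (z + t * I) * Gamma (w - t * I) := by
  refine (integrable_Gamma_vertical hz).mul_bdd (c := Real.Gamma w.re)
    (measurable_Gamma.comp (by fun_prop)).aestronglyMeasurable (.of_forall fun t => ?_)
  have hre : (w - t * I).re = w.re := by simp
  exact hre ▸ norm_Gamma_le_Gamma_re (hre.symm ▸ hw)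

/-! ### Mellin convolution and the Mellin–Parseval formula -/

lemma cpow_sub_one_mul_cpow_sub_one {y τ : ℝ} (hy : 0 < y) (hτ : 0 < τ) (s w : ℂ) :
    (y : ℂ) ^ (s - 1) * (τ : ℂ) ^ (w - 1) =
      (τ : ℂ) ^ (w - s - 1) * (τ * ((y * τ : ℝ) : ℂ) ^ (s - 1)) := by
  have hτ0 : (τ : ℂ) ≠ 0 := ofReal_ne_zero.mpr hτ.ne'
  have hpow : (τ : ℂ) ^ (w - 1) = (τ : ℂ) ^ (w - s - 1) * τ * (τ : ℂ) ^ (s - 1) := by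
    nth_rw 3 [← cpow_one (τ : ℂ)]
    rw [← cpow_add _ _ hτ0, ← cpow_add _ _ hτ0]
    ring_nf
  rw [ofReal_mul, mul_cpow_ofReal_nonneg hy.le hτ.le, hpow]
  ring

lemma integral_Ioi_mul_comp_mul_right {E : Type*} [NormedAddCommGroup E] [NormedSpace ℝ E]
    (h : ℝ → E) {τ : ℝ} (hτ : 0 < τ) :
    ∫ y in Set.Ioi (0 : ℝ), τ • h (y * τ) = ∫ u in Set.Ioi (0 : ℝ), h u := by
  rw [integral_smul, integral_comp_mul_right_Ioi h 0 hτ, zero_mul, smul_inv_smul₀ hτ.ne']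

lemma mellin_convolution_integrand {f g : ℝ → ℂ} {y τ : ℝ} (hy : 0 < y) (hτ : 0 < τ) (s w : ℂ) :
    (y : ℂ) ^ (s - 1) * (f (y * τ) * (g τ * (τ : ℂ) ^ (w - 1))) =
      ((τ : ℂ) ^ (w - s - 1) • g τ) * τ • (((y * τ : ℝ) : ℂ) ^ (s - 1) • f (y * τ)) := by
  simp only [smul_eq_mul, real_smul]
  linear_combination f (y * τ) * g τ * cpow_sub_one_mul_cpow_sub_one hy hτ s w

lemma integrable_mellin_convolution {f g : ℝ → ℂ} (hf : Measurable f) (hg : Measurable g)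
    {s w : ℂ} (hfs : MellinConvergent f s) (hgs : MellinConvergent g (w - s)) :
    Integrable (Function.uncurry fun y τ : ℝ =>
        (y : ℂ) ^ (s - 1) * (f (y * τ) * (g τ * (τ : ℂ) ^ (w - 1))))
      ((volume.restrict (Set.Ioi 0)).prod (volume.restrict (Set.Ioi 0))) := by
  rw [integrable_prod_iff' (Measurable.aestronglyMeasurable (by
    simp only [Function.uncurry_def]; fun_prop))]
  constructor <;> simp only [Function.uncurry_apply_pair]
  · filter_upwards [ae_restrict_mem measurableSet_Ioi] with τ hτ
    refine (integrableOn_congr_fun (fun y hy => mellin_convolution_integrand hy hτ s w)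
      measurableSet_Ioi).2 (((integrableOn_Ioi_comp_mul_right_iff
        (fun u : ℝ => (u : ℂ) ^ (s - 1) • f u) 0 hτ).2 ?_).smul τ |>.const_mul _)
    rwa [zero_mul]
  · refine (hgs.norm.mul_const (∫ u in Set.Ioi (0 : ℝ), ‖(u : ℂ) ^ (s - 1) • f u‖)).congr ?_
    filter_upwards [ae_restrict_mem measurableSet_Ioi] with τ hτ
    rw [← integral_Ioi_mul_comp_mul_right (fun u : ℝ => ‖(u : ℂ) ^ (s - 1) • f u‖) hτ,
      ← integral_const_mul]
    refine setIntegral_congr_fun measurableSet_Ioi fun y hy => ?_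
    simp only [mellin_convolution_integrand hy hτ s w, norm_mul ((τ : ℂ) ^ (w - s - 1) • g τ),
      norm_smul τ, Real.norm_of_nonneg (le_of_lt hτ), smul_eq_mul τ]

lemma hasMellin_convolution {f g : ℝ → ℂ} (hf : Measurable f) (hg : Measurable g) {s w : ℂ}
    (hfs : MellinConvergent f s) (hgs : MellinConvergent g (w - s)) :
    HasMellin (fun y : ℝ => ∫ τ in Set.Ioi (0 : ℝ), f (y * τ) * (g τ * (τ : ℂ) ^ (w - 1))) s
      (mellin f s * mellin g (w - s)) := by
  have hint := integrable_mellin_convolution hf hg hfs hgs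
  simp only [HasMellin, MellinConvergent, IntegrableOn, mellin, smul_eq_mul,
    ← integral_const_mul ((_ : ℂ) ^ (s - 1))]
  refine ⟨hint.integral_prod_left, ?_⟩
  rw [integral_integral_swap hint, ← integral_const_mul]
  refine setIntegral_congr_fun measurableSet_Ioi fun τ hτ => ?_
  rw [setIntegral_congr_fun measurableSet_Ioi fun y hy => mellin_convolution_integrand hy hτ s w,
    integral_const_mul, integral_Ioi_mul_comp_mul_right (fun u : ℝ => (u : ℂ) ^ (s - 1) • f u) hτ,
    mul_comm]
  simp only [smul_eq_mul]

lemma integral_cpow_mul_mellin {f : ℝ → ℂ} {c x : ℝ} (hx : 0 < x) (hf : MellinConvergent f c)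
    (hv : VerticalIntegrable (mellin f) c) (hfx : ContinuousAt f x) :
    ∫ t : ℝ, (x : ℂ) ^ (-(c + t * I)) * mellin f (c + t * I) = 2 * Real.pi * f x := by
  have hinv := mellinInv_mellin_eq c f hx hf hv hfx
  rw [mellinInv, real_smul] at hinv
  rw [← hinv, ← mul_assoc]
  push_cast
  rw [mul_one_div_cancel (by simp), one_mul]
  rfl

lemma integrable_cpow_mul_mellin_mul {f g : ℝ → ℂ} {c : ℝ} {w : ℂ}
    (hv : VerticalIntegrable (mellin f) c) (hg : MellinConvergent g (w - c)) :
    Integrable (fun p : ℝ × ℝ => (p.2 : ℂ) ^ (-(c + p.1 * I)) * mellin f (c + p.1 * I) *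
      ((p.2 : ℂ) ^ (w - 1) * g p.2)) (volume.prod (volume.restrict (Set.Ioi 0))) := by
  have hpos : ∀ᵐ p : ℝ × ℝ ∂volume.prod (volume.restrict (Set.Ioi 0)), 0 < p.2 :=
    Measure.quasiMeasurePreserving_snd.ae (ae_restrict_mem measurableSet_Ioi)
  refine ((hv.mul_prod hg).bdd_mul (f := fun p : ℝ × ℝ => (p.2 : ℂ) ^ (-(p.1 * I))) (c := 1)
    (Measurable.aestronglyMeasurable (by fun_prop)) (hpos.mono fun p hp => ?_)).congr
    (hpos.mono fun p hp => ?_)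
  · rw [norm_cpow_eq_rpow_re_of_pos hp]
    simp
  · have hp0 : (p.2 : ℂ) ≠ 0 := ofReal_ne_zero.mpr hp.ne'
    have hpow : (p.2 : ℂ) ^ (-(p.1 * I)) * (p.2 : ℂ) ^ (w - c - 1) =
        (p.2 : ℂ) ^ (-(c + p.1 * I)) * (p.2 : ℂ) ^ (w - 1) := by
      rw [← cpow_add _ _ hp0, ← cpow_add _ _ hp0]
      ring_nf
    simp only [smul_eq_mul]
    linear_combination mellin f (c + p.1 * I) * g p.2 * hpow

lemma integral_mellin_mul_mellin {f g : ℝ → ℂ} {c : ℝ} {w : ℂ} (hf : MellinConvergent f c)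
    (hv : VerticalIntegrable (mellin f) c) (hfc : ContinuousOn f (Set.Ioi 0))
    (hg : MellinConvergent g (w - c)) :
    ∫ t : ℝ, mellin f (c + t * I) * mellin g (w - (c + t * I)) =
      2 * Real.pi * mellin (fun x => f x * g x) w := by
  calc ∫ t : ℝ, mellin f (c + t * I) * mellin g (w - (c + t * I))
      = ∫ t : ℝ, ∫ x in Set.Ioi (0 : ℝ), (x : ℂ) ^ (-(c + t * I)) * mellin f (c + t * I) *
          ((x : ℂ) ^ (w - 1) * g x) := by
        congr 1 with t
        rw [mellin.eq_1 g, ← integral_const_mul]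
        refine setIntegral_congr_fun measurableSet_Ioi fun x hx => ?_
        have hsplit : w - (c + t * I) - 1 = -(c + t * I) + (w - 1) := by ring
        simp only [smul_eq_mul]
        rw [hsplit, cpow_add _ _ (ofReal_ne_zero.mpr (ne_of_gt hx))]
        ring
    _ = ∫ x in Set.Ioi (0 : ℝ), ∫ t : ℝ, (x : ℂ) ^ (-(c + t * I)) * mellin f (c + t * I) *
          ((x : ℂ) ^ (w - 1) * g x) :=
        integral_integral_swap (integrable_cpow_mul_mellin_mul hv hg)
    _ = ∫ x in Set.Ioi (0 : ℝ), 2 * Real.pi * ((x : ℂ) ^ (w - 1) • (f x * g x)) := by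
        refine setIntegral_congr_fun measurableSet_Ioi fun x hx => ?_
        simp only [integral_mul_const, smul_eq_mul,
          integral_cpow_mul_mellin hx hf hv (hfc.continuousAt (Ioi_mem_nhds hx))]
        ring
    _ = 2 * Real.pi * mellin (fun x => f x * g x) w := integral_const_mul _ _

/-! ### Barnes' first lemma -/

/-- The function `x ↦ Γ(C - A) x^{-A} (1 + x)^{A - C}`, whose Mellin transform is
`Γ(s - A) Γ(C - s)`. -/
def barnesKernel (A C : ℂ) (x : ℝ) : ℂ :=
  (x : ℂ) ^ (-A) * (Gamma (C - A) * (1 + (x : ℂ)) ^ (A - C))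

lemma hasMellin_exp_neg {s : ℂ} (hs : 0 < s.re) :
    HasMellin (fun x : ℝ => cexp (-(x : ℂ))) s (Gamma s) := by
  simp only [HasMellin, MellinConvergent, mellin, smul_eq_mul, mul_comm _ (cexp _)]
  refine ⟨(GammaIntegral_convergent hs).congr_fun (fun x _ => ?_) measurableSet_Ioi, ?_⟩
  · simp only [ofReal_exp, ofReal_neg]
  · simp only [Gamma_eq_integral hs, GammaIntegral, ofReal_exp, ofReal_neg]

lemma integral_exp_neg_mul_exp_neg {r : ℂ} (hr : 0 < r.re) {y : ℝ} (hy : 0 < y) :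
    ∫ τ in Set.Ioi (0 : ℝ), cexp (-((y * τ : ℝ) : ℂ)) * (cexp (-(τ : ℂ)) * (τ : ℂ) ^ (r - 1)) =
      Gamma r * (1 + (y : ℂ)) ^ (-r) := by
  have h1y : 0 < 1 + y := by positivity
  have hGamma := integral_cpow_mul_exp_neg_mul_Ioi hr h1y
  rw [one_div, inv_cpow _ _ (by rw [arg_ofReal_of_nonneg h1y.le]; exact Real.pi_pos.ne),
    ← cpow_neg, mul_comm] at hGamma
  push_cast at hGamma ⊢
  rw [← hGamma]
  congr 1 with τ
  rw [← mul_assoc, ← Complex.exp_add, mul_comm]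
  ring_nf

lemma hasMellin_barnesKernel {A C s : ℂ} (hA : A.re < s.re) (hC : s.re < C.re) :
    HasMellin (barnesKernel A C) s (Gamma (s - A) * Gamma (C - s)) := by
  have hexp : Measurable fun x : ℝ => cexp (-(x : ℂ)) := by fun_prop
  have hsA : 0 < (s - A).re := by rw [sub_re]; linarith
  have hCs : 0 < (C - s).re := by rw [sub_re]; linarith
  have hCA : 0 < (C - A).re := by rw [sub_re]; linarith
  have hsub : C - A - (s - A) = C - s := by ring
  have hconv := hasMellin_convolution hexp hexp (s := s - A) (w := C - A)
    (hasMellin_exp_neg hsA).1 (hasMellin_exp_neg (hsub ▸ hCs)).1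
  rw [hsub, (hasMellin_exp_neg hsA).2, (hasMellin_exp_neg hCs).2] at hconv
  have hcongr : Set.EqOn (fun y : ℝ => ((y : ℂ) ^ (s - A - 1)) • ∫ τ in Set.Ioi (0 : ℝ),
      cexp (-((y * τ : ℝ) : ℂ)) * (cexp (-(τ : ℂ)) * (τ : ℂ) ^ (C - A - 1)))
      (fun y : ℝ => (y : ℂ) ^ (s - 1) • barnesKernel A C y) (Set.Ioi 0) := by
    intro y hy
    have hsplit : s - A - 1 = s - 1 + -A := by ring
    simp only [integral_exp_neg_mul_exp_neg hCA hy, smul_eq_mul, barnesKernel]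
    rw [hsplit, cpow_add _ _ (ofReal_ne_zero.mpr (ne_of_gt hy)), neg_sub, mul_assoc]
  exact ⟨hconv.1.congr_fun hcongr measurableSet_Ioi,
    hconv.2 ▸ (setIntegral_congr_fun measurableSet_Ioi hcongr).symm⟩

lemma continuousOn_barnesKernel (A C : ℂ) : ContinuousOn (barnesKernel A C) (Set.Ioi 0) := by
  refine ContinuousOn.mul ?_ (continuousOn_const.mul ?_) <;>
    refine ContinuousOn.cpow_const (by fun_prop) fun x hx => .inl ?_
  · simpa using hx
  · have : 0 < x := hx
    simp only [add_re, one_re, ofReal_re]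
    positivity

lemma barnesKernel_mul_barnesKernel (A B C D : ℂ) {x : ℝ} (hx : 0 < x)
    (hABCD : Gamma (C + D - A - B) ≠ 0) :
    barnesKernel A C x * barnesKernel (-D) (-B) x =
      Gamma (C - A) * Gamma (D - B) / Gamma (C + D - A - B) *
        barnesKernel (A - D) (C - B) x := by
  have hx0 : (x : ℂ) ≠ 0 := ofReal_ne_zero.mpr hx.ne'
  have hx1 : 1 + (x : ℂ) ≠ 0 := by exact_mod_cast (by positivity : (1 + x) ≠ 0)
  have hxpow : (x : ℂ) ^ (-(A - D)) = (x : ℂ) ^ (-A) * (x : ℂ) ^ (- -D) := by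
    rw [← cpow_add _ _ hx0]; ring_nf
  have hx1pow : (1 + (x : ℂ)) ^ (A - D - (C - B)) =
      (1 + (x : ℂ)) ^ (A - C) * (1 + (x : ℂ)) ^ (-D - -B) := by
    rw [← cpow_add _ _ hx1]; ring_nf
  have hDB : -B - -D = D - B := by ring
  have hsum : C - B - (A - D) = C + D - A - B := by ring
  simp only [barnesKernel, hxpow, hx1pow, hDB, hsum]
  field_simp

lemma verticalIntegrable_mellin_barnesKernel {A C : ℂ} {c : ℝ} (hA : A.re < c) (hC : c < C.re) :
    VerticalIntegrable (mellin (barnesKernel A C)) c := by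
  refine (integrable_Gamma_mul_Gamma_vertical (z := c - A) (w := C - c)
    (by simpa using hA) (by simpa using hC)).congr (.of_forall fun t => ?_)
  simp only
  rw [(hasMellin_barnesKernel (by simpa using hA) (by simpa using hC)).2]
  ring_nf

lemma Gamma_barnes_first {A B C D : ℂ} {c : ℝ} (hA : A.re < c) (hB : B.re < c) (hC : c < C.re)
    (hD : c < D.re) :
    ∫ t : ℝ, Gamma (c + t * I - A) * Gamma (c + t * I - B) * Gamma (C - (c + t * I)) *
        Gamma (D - (c + t * I)) =
      2 * Real.pi * (Gamma (C - A) * Gamma (C - B) * Gamma (D - A) * Gamma (D - B) /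
        Gamma (C + D - A - B)) := by
  have hre (t : ℝ) : (c + t * I).re = c := by simp
  have hBD {s : ℂ} (hs : s.re = c) : mellin (barnesKernel (-D) (-B)) (0 - s) =
      Gamma (s - B) * Gamma (D - s) := by
    rw [(hasMellin_barnesKernel (by simpa [hs] using hD) (by simpa [hs] using hB)).2]
    ring_nf
  have hprod : mellin (fun x => barnesKernel A C x * barnesKernel (-D) (-B) x) 0 =
      Gamma (C - A) * Gamma (D - B) / Gamma (C + D - A - B) * (Gamma (D - A) * Gamma (C - B)) := by
    have hne : Gamma (C + D - A - B) ≠ 0 :=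
      Gamma_ne_zero_of_re_pos (by simp only [sub_re, add_re]; linarith)
    have hmellin := (hasMellin_barnesKernel (A := A - D) (C := C - B) (s := 0)
      (by simp only [sub_re, zero_re]; linarith) (by simp only [sub_re, zero_re]; linarith)).2
    rw [zero_sub, neg_sub, sub_zero] at hmellin
    rw [← hmellin, ← smul_eq_mul, ← mellin_const_smul]
    refine setIntegral_congr_fun measurableSet_Ioi fun x hx => ?_
    simp only [barnesKernel_mul_barnesKernel A B C D hx hne, smul_eq_mul]
  have hParseval := integral_mellin_mul_mellin (w := 0)
    (hasMellin_barnesKernel (s := c) hA hC).1 (verticalIntegrable_mellin_barnesKernel hA hC)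
    (continuousOn_barnesKernel A C)
    (hasMellin_barnesKernel (A := -D) (C := -B) (by simpa using hD) (by simpa using hB)).1
  rw [hprod] at hParseval
  refine (integral_congr_ae (.of_forall fun t => ?_)).trans (hParseval.trans (by ring))
  rw [hBD (hre t), (hasMellin_barnesKernel (by rwa [hre]) (by rwa [hre])).2]
  ring

/-- The right-hand side of Barnes' first lemma for `Γ_ℝ`, without the constant `4π`: `A`, `B` are
the poles to the left and `C`, `D` the poles to the right of the contour. -/
def barnesQuotient (A B C D : ℂ) : ℂ :=
  Gammaℝ (C - A) * Gammaℝ (C - B) * Gammaℝ (D - A) * Gammaℝ (D - B) / Gammaℝ (C + D - A - B)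

lemma barnesQuotient_eq_cpow_mul (A B C D : ℂ) :
    barnesQuotient A B C D = (Real.pi : ℂ) ^ ((A + B - C - D) / 2) *
      (Gamma ((C - A) / 2) * Gamma ((C - B) / 2) * Gamma ((D - A) / 2) * Gamma ((D - B) / 2) /
        Gamma ((C + D - A - B) / 2)) := by
  have hpi : (Real.pi : ℂ) ≠ 0 := ofReal_ne_zero.mpr Real.pi_ne_zero
  have hne : (Real.pi : ℂ) ^ ((A + B - C - D) / 2) ≠ 0 := by simp [cpow_eq_zero_iff, hpi]
  have hnum : (Real.pi : ℂ) ^ (-(C - A) / 2) * (Real.pi : ℂ) ^ (-(C - B) / 2) *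
      (Real.pi : ℂ) ^ (-(D - A) / 2) * (Real.pi : ℂ) ^ (-(D - B) / 2) =
      (Real.pi : ℂ) ^ ((A + B - C - D) / 2) * (Real.pi : ℂ) ^ ((A + B - C - D) / 2) := by
    simp only [← cpow_add _ _ hpi]
    ring_nf
  have hden : -(C + D - A - B) / 2 = (A + B - C - D) / 2 := by ring
  simp only [barnesQuotient, Gammaℝ_def, hden]
  rw [← mul_div_mul_left _ (Gamma ((C + D - A - B) / 2)) hne, ← mul_div_assoc]
  congr 1
  linear_combination Gamma ((C - A) / 2) * Gamma ((C - B) / 2) * Gamma ((D - A) / 2) *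
    Gamma ((D - B) / 2) * hnum

lemma Gammaℝ_barnes_first {A B C D q : ℂ} (hA : A.re < q.re) (hB : B.re < q.re)
    (hC : q.re < C.re) (hD : q.re < D.re) :
    ∫ t : ℝ, Gammaℝ (q + t * I - A) * Gammaℝ (q + t * I - B) * Gammaℝ (C - (q + t * I)) *
        Gammaℝ (D - (q + t * I)) = 4 * Real.pi * barnesQuotient A B C D := by
  have hpi : (Real.pi : ℂ) ≠ 0 := ofReal_ne_zero.mpr Real.pi_ne_zero
  have hneg {z : ℂ} (hz : z.re < q.re) : ((z - q) / 2).re < 0 := by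
    rw [div_ofNat_re, sub_re]; linarith
  have hpos {z : ℂ} (hz : q.re < z.re) : 0 < ((z - q) / 2).re := by
    rw [div_ofNat_re, sub_re]; linarith
  let G : ℝ → ℂ := fun u => Gamma ((0 : ℝ) + u * I - (A - q) / 2) *
    Gamma ((0 : ℝ) + u * I - (B - q) / 2) * Gamma ((C - q) / 2 - ((0 : ℝ) + u * I)) *
    Gamma ((D - q) / 2 - ((0 : ℝ) + u * I))
  have hG : ∫ u, G u = _ := Gamma_barnes_first (hneg hA) (hneg hB) (hpos hC) (hpos hD)
  have hcpow (t : ℝ) : (Real.pi : ℂ) ^ (-(q + t * I - A) / 2) *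
      (Real.pi : ℂ) ^ (-(q + t * I - B) / 2) * (Real.pi : ℂ) ^ (-(C - (q + t * I)) / 2) *
      (Real.pi : ℂ) ^ (-(D - (q + t * I)) / 2) = (Real.pi : ℂ) ^ ((A + B - C - D) / 2) := by
    simp only [← cpow_add _ _ hpi]
    ring_nf
  have hscale (t : ℝ) : Gammaℝ (q + t * I - A) * Gammaℝ (q + t * I - B) *
      Gammaℝ (C - (q + t * I)) * Gammaℝ (D - (q + t * I)) =
      (Real.pi : ℂ) ^ ((A + B - C - D) / 2) * G (t / 2) := by
    rw [← hcpow t]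
    simp only [Gammaℝ_def, G]
    push_cast
    ring_nf
  simp only [hscale]
  rw [integral_const_mul, Measure.integral_comp_div G, hG, barnesQuotient_eq_cpow_mul,
    abs_of_pos two_pos, real_smul]
  push_cast
  ring_nf

/-! ### Bessel kernels -/

/-- The integrand `e^{-xτ} e^{-1/τ} τ^{ν-1}` of `2 x^{-ν/2} K_ν(2√x)`. -/
def expInvIntegrand (ν : ℂ) (x τ : ℝ) : ℂ :=
  cexp (-((x * τ : ℝ) : ℂ)) * (cexp (-((τ⁻¹ : ℝ) : ℂ)) * (τ : ℂ) ^ (ν - 1))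

@[fun_prop]
lemma measurable_expInvIntegrand {T : Type*} [MeasurableSpace T] {ν : T → ℂ} {x τ : T → ℝ}
    (hν : Measurable ν) (hx : Measurable x) (hτ : Measurable τ) :
    Measurable fun t => expInvIntegrand (ν t) (x t) (τ t) := by
  simp only [expInvIntegrand]
  fun_prop

lemma norm_expInvIntegrand (ν : ℂ) (x : ℝ) {τ : ℝ} (hτ : 0 < τ) :
    ‖expInvIntegrand ν x τ‖ = Real.exp (-(x * τ)) * (Real.exp (-τ⁻¹) * τ ^ (ν.re - 1)) := by
  simp only [expInvIntegrand, norm_mul]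
  rw [norm_cpow_eq_rpow_re_of_pos hτ, ← ofReal_neg, ← ofReal_neg, norm_exp_ofReal,
    norm_exp_ofReal, sub_re, one_re]

lemma expInvIntegrand_ofReal (ν x : ℝ) {τ : ℝ} (hτ : 0 < τ) :
    expInvIntegrand ν x τ = (‖expInvIntegrand ν x τ‖ : ℂ) := by
  rw [norm_expInvIntegrand _ _ hτ, expInvIntegrand, ofReal_re]
  push_cast
  rw [ofReal_cpow hτ.le]
  push_cast
  rfl

lemma exp_neg_inv_le (N : ℕ) {τ : ℝ} (hτ : 0 < τ) :
    Real.exp (-τ⁻¹) ≤ N.factorial * τ ^ (N : ℝ) := by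
  have h := Real.pow_div_factorial_le_exp τ⁻¹ (by positivity) N
  rw [inv_pow] at h
  rw [Real.exp_neg, Real.rpow_natCast]
  calc (Real.exp τ⁻¹)⁻¹ ≤ ((τ ^ N)⁻¹ / N.factorial)⁻¹ := by gcongr
    _ = N.factorial * τ ^ N := by rw [inv_div, div_inv_eq_mul]

lemma integrableOn_expInvIntegrand (ν : ℂ) {x : ℝ} (hx : 0 < x) :
    IntegrableOn (expInvIntegrand ν x) (Set.Ioi 0) := by
  obtain ⟨N, hN⟩ := exists_nat_gt (-ν.re)
  have hgamma : IntegrableOn (fun τ : ℝ => τ ^ (ν.re + N - 1) * Real.exp (-x * τ)) (Set.Ioi 0) := by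
    simpa using integrableOn_rpow_mul_exp_neg_mul_rpow (s := ν.re + N - 1) (p := 1) (b := x)
      (by linarith) one_pos hx
  refine (hgamma.const_mul (N.factorial : ℝ)).mono'
    (by fun_prop : Measurable (expInvIntegrand ν x)).aestronglyMeasurable
    ((ae_restrict_mem measurableSet_Ioi).mono fun τ (hτ : 0 < τ) => ?_)
  calc ‖expInvIntegrand ν x τ‖
      = Real.exp (-(x * τ)) * (Real.exp (-τ⁻¹) * τ ^ (ν.re - 1)) := norm_expInvIntegrand ν x hτ
    _ ≤ Real.exp (-(x * τ)) * ((N.factorial * τ ^ (N : ℝ)) * τ ^ (ν.re - 1)) := by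
        gcongr
        exact exp_neg_inv_le N hτ
    _ = N.factorial * (τ ^ (ν.re + N - 1) * Real.exp (-x * τ)) := by
        rw [show ν.re + N - 1 = N + (ν.re - 1) by ring, Real.rpow_add hτ, neg_mul]
        ring

lemma continuousAt_integral_expInvIntegrand (ν : ℂ) {x : ℝ} (hx : 0 < x) :
    ContinuousAt (fun x : ℝ => ∫ τ in Set.Ioi (0 : ℝ), expInvIntegrand ν x τ) x := by
  refine continuousAt_of_dominated (bound := fun τ => ‖expInvIntegrand ν (x / 2) τ‖)
    (.of_forall fun y => (by fun_prop : Measurable (expInvIntegrand ν y)).aestronglyMeasurable) ?_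
    (integrableOn_expInvIntegrand _ (half_pos hx)).norm
    (.of_forall fun τ => by simp only [expInvIntegrand]; fun_prop)
  filter_upwards [lt_mem_nhds (half_lt_self hx)] with y hy
  refine (ae_restrict_mem measurableSet_Ioi).mono fun τ (hτ : 0 < τ) => ?_
  rw [norm_expInvIntegrand _ _ hτ, norm_expInvIntegrand _ _ hτ]
  gcongr

lemma hasMellin_integral_expInvIntegrand {ν u : ℂ} (hu : 0 < u.re) (huν : 0 < (u - ν).re) :
    HasMellin (fun x : ℝ => ∫ τ in Set.Ioi (0 : ℝ), expInvIntegrand ν x τ) u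
      (Gamma u * Gamma (u - ν)) := by
  have hexp := hasMellin_exp_neg hu
  have hexp' := hasMellin_exp_neg huν
  have hinv : MellinConvergent (fun x : ℝ => cexp (-((x⁻¹ : ℝ) : ℂ))) (ν - u) := by
    have := (MellinConvergent.comp_rpow (f := fun x : ℝ => cexp (-(x : ℂ))) (s := ν - u)
      (a := -1) (by norm_num)).2 (by
        rw [show (ν - u) / ((-1 : ℝ) : ℂ) = u - ν by push_cast; ring]
        exact hexp'.1)
    simpa [Real.rpow_neg_one] using this
  have h := hasMellin_convolution (by fun_prop) (by fun_prop) hexp.1 hinv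
  rwa [hexp.2, mellin_comp_inv (fun x : ℝ => cexp (-(x : ℂ))) (ν - u), neg_sub, hexp'.2] at h

lemma hasMellin_comp_mul_sq {f : ℝ → ℂ} {s v : ℂ} {r : ℝ} (hr : 0 < r)
    (hf : HasMellin f (s / 2) v) :
    HasMellin (fun y => f (r * y ^ 2)) s (1 / 2 * ((r : ℂ) ^ (-(s / 2)) * v)) := by
  have hconv : MellinConvergent (fun x => f (r * x)) (s / 2) :=
    (MellinConvergent.comp_mul_left hr).2 hf.1
  have hval := mellin_comp_rpow (fun x => f (r * x)) s 2
  simp only [ofReal_ofNat, Real.rpow_two] at hval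
  refine ⟨?_, ?_⟩
  · simpa using (MellinConvergent.comp_rpow (f := fun x => f (r * x)) (s := s) (a := 2)
      (by norm_num)).2 (by simpa using hconv)
  · rw [hval, mellin_comp_mul_left f _ hr, hf.2, abs_of_pos two_pos]
    simp

/-- The integrand of `besselKernel`. -/
def besselIntegrand (A B : ℂ) (y τ : ℝ) : ℂ :=
  (y : ℂ) ^ (-A) * (Real.pi : ℂ) ^ ((B - A) / 2) *
    expInvIntegrand ((B - A) / 2) (Real.pi ^ 2 * y ^ 2) τ

/-- The function `2 y^{-(A+B)/2} K_{(A-B)/2}(2πy)`, the inverse Mellin transform of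
`Γ_ℝ(s - A) Γ_ℝ(s - B) / 2`. -/
def besselKernel (A B : ℂ) (y : ℝ) : ℂ := ∫ τ in Set.Ioi (0 : ℝ), besselIntegrand A B y τ

lemma besselKernel_eq_mul (A B : ℂ) (y : ℝ) :
    besselKernel A B y = (y : ℂ) ^ (-A) * (Real.pi : ℂ) ^ ((B - A) / 2) *
      ∫ τ in Set.Ioi (0 : ℝ), expInvIntegrand ((B - A) / 2) (Real.pi ^ 2 * y ^ 2) τ :=
  integral_const_mul _ _

@[fun_prop]
lemma measurable_besselIntegrand {T : Type*} [MeasurableSpace T] {A B : T → ℂ} {y τ : T → ℝ}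
    (hA : Measurable A) (hB : Measurable B) (hy : Measurable y) (hτ : Measurable τ) :
    Measurable fun t => besselIntegrand (A t) (B t) (y t) (τ t) := by
  simp only [besselIntegrand]
  fun_prop

@[fun_prop]
lemma measurable_besselKernel {T : Type*} [MeasurableSpace T] {A B : T → ℂ} {y : T → ℝ}
    (hA : Measurable A) (hB : Measurable B) (hy : Measurable y) :
    Measurable fun t => besselKernel (A t) (B t) (y t) :=
  (StronglyMeasurable.integral_prod_right
    (f := fun t τ => besselIntegrand (A t) (B t) (y t) τ)
    (by fun_prop : Measurable fun p : T × ℝ =>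
      besselIntegrand (A p.1) (B p.1) (y p.1) p.2).stronglyMeasurable).measurable

lemma integrableOn_besselIntegrand (A B : ℂ) {y : ℝ} (hy : 0 < y) :
    IntegrableOn (besselIntegrand A B y) (Set.Ioi 0) :=
  (integrableOn_expInvIntegrand _ (by positivity)).const_mul _

lemma besselIntegrand_re (A B : ℂ) {y τ : ℝ} (hy : 0 < y) (hτ : 0 < τ) :
    besselIntegrand A.re B.re y τ = (‖besselIntegrand A B y τ‖ : ℂ) := by
  have hν : ((B.re : ℂ) - A.re) / 2 = (((B.re - A.re) / 2 : ℝ) : ℂ) := by push_cast; ring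
  have hν' : ((B - A) / 2).re = (B.re - A.re) / 2 := by simp
  simp only [besselIntegrand, norm_mul, norm_cpow_eq_rpow_re_of_pos hy,
    norm_cpow_eq_rpow_re_of_pos Real.pi_pos, hν, hν', neg_re]
  rw [expInvIntegrand_ofReal _ _ hτ, norm_expInvIntegrand _ _ hτ, norm_expInvIntegrand _ _ hτ, hν',
    ofReal_re, ← ofReal_neg, ← ofReal_cpow hy.le, ← ofReal_cpow Real.pi_pos.le]
  push_cast
  rfl

lemma norm_besselIntegrand (A B : ℂ) {y τ : ℝ} (hy : 0 < y) (hτ : 0 < τ) :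
    ‖besselIntegrand A B y τ‖ = ‖besselIntegrand A.re B.re y τ‖ := by
  rw [besselIntegrand_re A B hy hτ, norm_real, norm_norm]

lemma norm_besselKernel_le (A B : ℂ) {y : ℝ} (hy : 0 < y) :
    ‖besselKernel A B y‖ ≤ ‖besselKernel A.re B.re y‖ := by
  have hre : besselKernel A.re B.re y =
      ((∫ τ in Set.Ioi (0 : ℝ), ‖besselIntegrand A B y τ‖ : ℝ) : ℂ) := by
    rw [← integral_complex_ofReal]
    exact setIntegral_congr_fun measurableSet_Ioi fun τ hτ => besselIntegrand_re A B hy hτ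
  rw [hre, norm_real]
  exact (norm_integral_le_integral_norm _).trans (le_abs_self _)

lemma continuousAt_besselKernel (A B : ℂ) {y : ℝ} (hy : 0 < y) :
    ContinuousAt (besselKernel A B) y := by
  have hcpow : ContinuousAt (fun y : ℝ => (y : ℂ) ^ (-A)) y :=
    continuous_ofReal.continuousAt.cpow continuousAt_const (by simp [slitPlane, hy])
  have hint := (continuousAt_integral_expInvIntegrand ((B - A) / 2)
    (x := Real.pi ^ 2 * y ^ 2) (by positivity)).comp
    (f := fun y : ℝ => Real.pi ^ 2 * y ^ 2) (by fun_prop)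
  rw [funext (besselKernel_eq_mul A B)]
  exact (hcpow.mul continuousAt_const).mul hint

lemma hasMellin_besselKernel {A B s : ℂ} (hA : A.re < s.re) (hB : B.re < s.re) :
    HasMellin (besselKernel A B) s (1 / 2 * (Gammaℝ (s - A) * Gammaℝ (s - B))) := by
  have hsub : (s - A) / 2 - (B - A) / 2 = (s - B) / 2 := by ring
  have h := hasMellin_integral_expInvIntegrand (ν := (B - A) / 2) (u := (s - A) / 2)
    (by simpa using hA) (by rw [hsub]; simpa using hB)
  rw [hsub] at h
  have h := hasMellin_comp_mul_sq (by positivity : 0 < Real.pi ^ 2) h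
  have hfun : besselKernel A B = fun y : ℝ => (y : ℂ) ^ (-A) • ((Real.pi : ℂ) ^ ((B - A) / 2) •
      ∫ τ in Set.Ioi (0 : ℝ), expInvIntegrand ((B - A) / 2) (Real.pi ^ 2 * y ^ 2) τ) := by
    funext y
    rw [besselKernel_eq_mul, smul_eq_mul, smul_eq_mul, mul_assoc]
  rw [hfun]
  refine ⟨MellinConvergent.cpow_smul.2 (h.1.const_smul _), ?_⟩
  have hpi : (Real.pi : ℂ) ^ ((B - A) / 2) * ((Real.pi ^ 2 : ℝ) : ℂ) ^ (-((s - A) / 2)) =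
      (Real.pi : ℂ) ^ (-(s - A) / 2) * (Real.pi : ℂ) ^ (-(s - B) / 2) := by
    have h0 : (Real.pi : ℂ) ≠ 0 := ofReal_ne_zero.mpr Real.pi_ne_zero
    rw [pow_two, ofReal_mul, mul_cpow_ofReal_nonneg Real.pi_pos.le Real.pi_pos.le,
      ← cpow_add _ _ h0, ← cpow_add _ _ h0, ← cpow_add _ _ h0]
    ring_nf
  rw [mellin_cpow_smul, mellin_const_smul, ← sub_eq_add_neg, h.2, Gammaℝ_def, Gammaℝ_def,
    smul_eq_mul]
  linear_combination (1 / 2 * Gamma ((s - A) / 2) * Gamma ((s - B) / 2)) * hpi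

lemma integrable_Gammaℝ_mul_Gammaℝ_vertical {z w : ℂ} (hz : 0 < z.re) (hw : 0 < w.re) :
    Integrable fun t : ℝ => Gammaℝ (z + t * I) * Gammaℝ (w + t * I) := by
  refine (integrable_Gammaℝ_vertical hw).bdd_mul (c := ‖Gammaℝ z.re‖)
    (by fun_prop : Measurable fun t : ℝ => Gammaℝ (z + t * I)).aestronglyMeasurable
    (.of_forall fun t => ?_)
  simpa using norm_Gammaℝ_le (s := z + t * I) (by simpa using hz)

lemma integral_cpow_mul_Gammaℝ_mul_Gammaℝ {A B : ℂ} {c y : ℝ} (hA : A.re < c) (hB : B.re < c)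
    (hy : 0 < y) :
    ∫ t : ℝ, (y : ℂ) ^ (-(c + t * I)) *
      (1 / 2 * (Gammaℝ (c + t * I - A) * Gammaℝ (c + t * I - B))) =
      2 * Real.pi * besselKernel A B y := by
  have hM (t : ℝ) := hasMellin_besselKernel (A := A) (B := B) (s := c + t * I)
    (by simpa using hA) (by simpa using hB)
  have hV : VerticalIntegrable (mellin (besselKernel A B)) c := by
    refine ((integrable_Gammaℝ_mul_Gammaℝ_vertical (z := c - A) (w := c - B)
      (by simpa using hA) (by simpa using hB)).const_mul (1 / 2)).congr (.of_forall fun t => ?_)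
    simp only [(hM t).2, sub_add_eq_add_sub]
  rw [← integral_cpow_mul_mellin hy (by simpa using (hM 0).1) hV (continuousAt_besselKernel _ _ hy)]
  simp only [(hM _).2]

/-! ### Exchanging integrals of products of kernels -/

section Fubini

variable {T X ι : Type*} [MeasurableSpace T] [MeasurableSpace X] [Fintype ι]

/-- A jointly measurable family `f t` of functions whose `L¹(ν)` norms are bounded uniformly in the
parameter `t`; products of such families may be integrated against any integrable function of `t`
in either order. -/
structure IsL1BoundedKernel (f : T → X → ℂ) (ν : Measure X) : Prop where
  measurable_uncurry : Measurable (Function.uncurry f)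
  integrable (t : T) : Integrable (f t) ν
  exists_integral_norm_le : ∃ C, ∀ t, ∫ x, ‖f t x‖ ∂ν ≤ C

lemma isL1BoundedKernel_const {h : X → ℂ} {ν : Measure X} (hm : Measurable h)
    (hi : Integrable h ν) : IsL1BoundedKernel (fun _ : T => h) ν :=
  ⟨hm.comp measurable_snd, fun _ => hi, _, fun _ => le_rfl⟩

lemma isL1BoundedKernel_comp_add_right {h : ℝ → ℂ} (hm : Measurable h) (hi : Integrable h)
    {φ : T → ℝ} (hφ : Measurable φ) : IsL1BoundedKernel (fun t x => h (x + φ t)) volume :=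
  ⟨hm.comp (by fun_prop : Measurable fun p : T × ℝ => p.2 + φ p.1),
    fun t => hi.comp_add_right (φ t), _,
    fun t => (integral_add_right_eq_self (fun x => ‖h x‖) (φ t)).le⟩

lemma IsL1BoundedKernel.mono {f g : T → X → ℂ} {ν : Measure X} (hg : IsL1BoundedKernel g ν)
    (hf : Measurable (Function.uncurry f)) (hfg : ∀ t, ∀ᵐ x ∂ν, ‖f t x‖ ≤ ‖g t x‖) :
    IsL1BoundedKernel f ν := by
  have hint (t : T) : Integrable (f t) ν :=
    (hg.integrable t).mono hf.of_uncurry_left.aestronglyMeasurable (hfg t)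
  obtain ⟨C, hC⟩ := hg.exists_integral_norm_le
  exact ⟨hf, hint, C, fun t =>
    (integral_mono_ae (hint t).norm (hg.integrable t).norm (hfg t)).trans (hC t)⟩

variable {μ : Measure T} {ν : ι → Measure X} [∀ j, SigmaFinite (ν j)]
  {F : T → ℂ} {f : ι → T → X → ℂ}

lemma integrable_mul_prod (hF : Integrable F μ) (hf : ∀ j, IsL1BoundedKernel (f j) (ν j)) :
    Integrable (fun q : T × (ι → X) => F q.1 * ∏ j, f j q.1 (q.2 j)) (μ.prod (Measure.pi ν)) := by
  have hm : AEStronglyMeasurable (fun q : T × (ι → X) => F q.1 * ∏ j, f j q.1 (q.2 j))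
      (μ.prod (Measure.pi ν)) :=
    hF.aestronglyMeasurable.comp_fst.mul <| Measurable.aestronglyMeasurable <|
      Finset.measurable_fun_prod _ fun j _ => (hf j).measurable_uncurry.comp
        (by fun_prop : Measurable fun q : T × (ι → X) => (q.1, q.2 j))
  choose C hC using fun j => (hf j).exists_integral_norm_le
  refine (integrable_prod_iff hm).2 ⟨.of_forall fun t =>
    (Integrable.fintype_prod fun j => (hf j).integrable t).const_mul (F t),
    (hF.norm.mul_const (∏ j, C j)).mono' hm.norm.integral_prod_right' (.of_forall fun t => ?_)⟩
  rw [Real.norm_of_nonneg (integral_nonneg fun _ => norm_nonneg _)]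
  simp only [norm_mul, norm_prod]
  rw [integral_const_mul, integral_fintype_prod_eq_prod (fun j x => ‖f j t x‖)]
  gcongr with j
  exact hC j t

variable [SFinite μ]

lemma integral_integral_mul_prod (hF : Integrable F μ)
    (hf : ∀ j, IsL1BoundedKernel (f j) (ν j)) :
    ∫ x, ∫ t, F t * ∏ j, f j t (x j) ∂μ ∂Measure.pi ν = ∫ t, F t * ∏ j, ∫ x, f j t x ∂ν j ∂μ := by
  rw [← integral_integral_swap (integrable_mul_prod hF hf)]
  congr 1 with t
  rw [integral_const_mul, integral_fintype_prod_eq_prod (fun j x => f j t x)]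

lemma integrable_integral_mul_prod (hF : Integrable F μ)
    (hf : ∀ j, IsL1BoundedKernel (f j) (ν j)) :
    Integrable (fun x : ι → X => ∫ t, F t * ∏ j, f j t (x j) ∂μ) (Measure.pi ν) :=
  (integrable_mul_prod hF hf).integral_prod_right

end Fubini

section Kernels

variable {T : Type*} [MeasurableSpace T] {A B : T → ℂ} {α β : ℝ}

lemma isL1BoundedKernel_besselIntegrand (hA : Measurable A) (hB : Measurable B)
    (hα : ∀ t, (A t).re = α) (hβ : ∀ t, (B t).re = β) {y : ℝ} (hy : 0 < y) :
    IsL1BoundedKernel (fun t => besselIntegrand (A t) (B t) y)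
      (volume.restrict (Set.Ioi 0)) := by
  have hm : Measurable fun q : T × ℝ => besselIntegrand (A q.1) (B q.1) y q.2 := by fun_prop
  refine (isL1BoundedKernel_const (h := besselIntegrand α β y) (by fun_prop)
    (integrableOn_besselIntegrand α β hy)).mono hm fun t =>
    (ae_restrict_mem measurableSet_Ioi).mono fun τ hτ => ?_
  rw [norm_besselIntegrand _ _ hy hτ, hα, hβ]

lemma isL1BoundedKernel_cpow_mul_besselKernel (hA : Measurable A) (hB : Measurable B)
    (hα : ∀ t, (A t).re = α) (hβ : ∀ t, (B t).re = β) {s : ℂ} (hαs : α < s.re) (hβs : β < s.re) :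
    IsL1BoundedKernel (fun t (y : ℝ) => (y : ℂ) ^ (s - 1) * besselKernel (A t) (B t) y)
      (volume.restrict (Set.Ioi 0)) := by
  have hm : Measurable fun q : T × ℝ => (q.2 : ℂ) ^ (s - 1) * besselKernel (A q.1) (B q.1) q.2 := by
    fun_prop
  refine (isL1BoundedKernel_const (h := fun y : ℝ => (y : ℂ) ^ (s - 1) * besselKernel α β y)
    (by fun_prop) (hasMellin_besselKernel (A := α) (B := β) hαs hβs).1).mono hm fun t =>
    (ae_restrict_mem measurableSet_Ioi).mono fun y hy => ?_
  rw [norm_mul, norm_mul, ← hα t, ← hβ t]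
  gcongr
  exact norm_besselKernel_le _ _ hy

lemma isL1BoundedKernel_Gammaℝ_mul_Gammaℝ_mul (hA : Measurable A) (hB : Measurable B)
    (hα : ∀ t, (A t).re = α) (hβ : ∀ t, (B t).re = β) {q : ℂ} (hαq : α < q.re) (hβq : β < q.re)
    {g : ℝ → ℂ} (hg : Measurable g) {M : ℝ} (hM : ∀ x, ‖g x‖ ≤ M) :
    IsL1BoundedKernel (fun t (x : ℝ) => Gammaℝ (q + x * I - A t) * Gammaℝ (q + x * I - B t) * g x)
      volume := by
  have hm : Measurable fun p : T × ℝ =>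
      Gammaℝ (q + p.2 * I - A p.1) * Gammaℝ (q + p.2 * I - B p.1) * g p.2 := by fun_prop
  have hih := integrable_Gammaℝ_vertical (z := (q.re - α : ℝ)) (by simpa using hαq)
  refine (isL1BoundedKernel_comp_add_right (φ := fun t => (q - A t).im) (by fun_prop)
    (hih.mul_const ((‖Gammaℝ (q.re - β : ℝ)‖ * M : ℝ) : ℂ)) (by fun_prop)).mono hm
    fun t => .of_forall fun x => ?_
  have hshift : q + x * I - A t = (q.re - α : ℝ) + ((x + (q - A t).im : ℝ) : ℂ) * I := by
    rw [← hα t]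
    apply Complex.ext <;> simp
    ring
  have hbound : ‖Gammaℝ (q + x * I - B t)‖ ≤ ‖Gammaℝ (q.re - β : ℝ)‖ := by
    simpa [hβ] using norm_Gammaℝ_le (s := q + x * I - B t) (by simpa [hβ] using hβq)
  have hM0 := (norm_nonneg _).trans (hM x)
  rw [norm_mul, norm_mul, norm_mul, hshift, norm_real, Real.norm_of_nonneg (by positivity),
    mul_assoc]
  gcongr
  exact hM x

lemma integral_integral_mul_prod_barnes {μ : Measure T} [SFinite μ] {ι : Type*} [Fintype ι]
    {F : T → ℂ} (hF : Integrable F μ) {A B : ι → T → ℂ} {C D q : ι → ℂ} {α β : ι → ℝ}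
    (hA : ∀ j, Measurable (A j)) (hB : ∀ j, Measurable (B j))
    (hα : ∀ j t, (A j t).re = α j) (hβ : ∀ j t, (B j t).re = β j)
    (hαq : ∀ j, α j < (q j).re) (hβq : ∀ j, β j < (q j).re)
    (hqC : ∀ j, (q j).re < (C j).re) (hqD : ∀ j, (q j).re < (D j).re) :
    ∫ x : ι → ℝ, ∫ t, F t * ∏ j, (Gammaℝ (q j + x j * I - A j t) * Gammaℝ (q j + x j * I - B j t) *
        (Gammaℝ (C j - (q j + x j * I)) * Gammaℝ (D j - (q j + x j * I)))) ∂μ =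
      (4 * Real.pi) ^ Fintype.card ι *
        ∫ t, F t * ∏ j, barnesQuotient (A j t) (B j t) (C j) (D j) ∂μ := by
  have hbound {z : ℂ} {j : ι} (h : (q j).re < z.re) (x : ℝ) :
      ‖Gammaℝ (z - (q j + x * I))‖ ≤ ‖Gammaℝ (z - q j).re‖ := by
    simpa using norm_Gammaℝ_le (s := z - (q j + x * I)) (by simpa using h)
  have hkernel (j : ι) := isL1BoundedKernel_Gammaℝ_mul_Gammaℝ_mul (hA j) (hB j) (hα j) (hβ j)
    (hαq j) (hβq j) (g := fun x : ℝ => Gammaℝ (C j - (q j + x * I)) * Gammaℝ (D j - (q j + x * I)))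
    (by fun_prop)
    (fun x => (norm_mul_le _ _).trans (mul_le_mul (hbound (hqC j) x) (hbound (hqD j) x)
      (norm_nonneg _) (norm_nonneg _)))
  have hbarnes (j : ι) (t : T) := Gammaℝ_barnes_first (A := A j t) (B := B j t)
    (by rw [hα]; exact hαq j) (by rw [hβ]; exact hβq j) (hqC j) (hqD j)
  simp only [← mul_assoc] at hbarnes hkernel ⊢
  rw [volume_pi, integral_integral_mul_prod hF hkernel, ← integral_const_mul]
  simp only [hbarnes, Finset.prod_mul_distrib, Finset.prod_const, Finset.card_univ,
    mul_left_comm (F _), mul_pow]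

end Kernels

/-! ### The recursion for Whittaker functions -/

lemma integral_expInvIntegrand (ν : ℂ) {b : ℝ} (hb : 0 < b) :
    ∫ τ in Set.Ioi (0 : ℝ), expInvIntegrand ν (b ^ 2) τ =
      2 * (b : ℂ) ^ (-ν) * BesselK ν (2 * b) := by
  have hb0 : (b : ℂ) ≠ 0 := ofReal_ne_zero.mpr hb.ne'
  set g : ℝ → ℂ := fun t => cexp (-(((2 * b : ℝ) : ℂ) / 2) * ((t : ℂ) + 1 / (t : ℂ))) *
    (t : ℂ) ^ ν / (t : ℂ) with hg
  have hscale : ∀ τ ∈ Set.Ioi (0 : ℝ), expInvIntegrand ν (b ^ 2) τ = b ^ (1 - ν) * g (b * τ) := by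
    intro τ (hτ : 0 < τ)
    have hτ0 : (τ : ℂ) ≠ 0 := ofReal_ne_zero.mpr hτ.ne'
    have hexp : cexp (-((b ^ 2 * τ : ℝ) : ℂ)) * cexp (-((τ⁻¹ : ℝ) : ℂ)) =
        cexp (-(((2 * b : ℝ) : ℂ) / 2) * (((b * τ : ℝ) : ℂ) + 1 / ((b * τ : ℝ) : ℂ))) := by
      rw [← Complex.exp_add]
      push_cast
      congr 1
      field_simp
      ring
    simp only [hg]
    rw [← hexp, expInvIntegrand, ofReal_mul b τ, mul_cpow_ofReal_nonneg hb.le hτ.le,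
      cpow_sub _ _ hb0, cpow_sub _ _ hτ0, cpow_one, cpow_one]
    have : (b : ℂ) ^ ν ≠ 0 := by simp [cpow_eq_zero_iff, hb0]
    field_simp
  have hsubst := integral_comp_mul_left_Ioi g 0 hb
  rw [mul_zero] at hsubst
  have hBesselK : BesselK ν (2 * b) = 1 / 2 * ∫ t in Set.Ioi (0 : ℝ), g t := rfl
  rw [setIntegral_congr_fun measurableSet_Ioi hscale, integral_const_mul, hsubst, hBesselK,
    real_smul, ofReal_inv, sub_eq_neg_add, cpow_add _ _ hb0, cpow_one]
  field_simp

lemma besselKernel_eq_cpow_mul_BesselK (A B : ℂ) {y : ℝ} (hy : 0 < y) :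
    besselKernel A B y =
      2 * (y : ℂ) ^ (-(A + B) / 2) * BesselK ((B - A) / 2) (2 * Real.pi * y) := by
  have hπ0 : (Real.pi : ℂ) ≠ 0 := ofReal_ne_zero.mpr Real.pi_ne_zero
  have hπ : (Real.pi : ℂ) ^ ((B - A) / 2) ≠ 0 := by simp [cpow_eq_zero_iff, hπ0]
  rw [besselKernel_eq_mul, ← mul_pow, integral_expInvIntegrand _ (by positivity : 0 < Real.pi * y),
    ofReal_mul Real.pi y, mul_cpow_ofReal_nonneg Real.pi_pos.le hy.le, cpow_neg (Real.pi : ℂ),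
    show -(A + B) / 2 = -A + -((B - A) / 2) by ring, cpow_add _ _ (ofReal_ne_zero.mpr hy.ne'),
    mul_assoc 2 Real.pi]
  field_simp

lemma WhittAr_two_eq_besselKernel (a : ℕ → ℂ) (y : ℕ → ℝ) (hy : 0 < y 0) :
    WhittAr 2 a y = besselKernel (-a 0) (-a 1) (y 0) := by
  rw [besselKernel_eq_cpow_mul_BesselK _ _ hy, WhittAr]
  ring_nf

lemma prod_cpow_const {ι : Type*} (s : Finset ι) {x : ℂ} (hx : x ≠ 0) (f : ι → ℂ) :
    ∏ i ∈ s, x ^ f i = x ^ ∑ i ∈ s, f i := by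
  simp only [cpow_def_of_ne_zero hx, ← Complex.exp_sum, Finset.mul_sum]

lemma ofReal_sqrt_div_cpow {x w : ℝ} (hx : 0 < x) (hw : 0 < w) (z : ℂ) :
    (Real.sqrt (x / w) : ℂ) ^ z = (x : ℂ) ^ (z / 2) * (w : ℂ) ^ (-z / 2) := by
  have hsqrt : 0 < Real.sqrt (x / w) := by positivity
  rw [cpow_def_of_ne_zero (ofReal_ne_zero.mpr hsqrt.ne'),
    cpow_def_of_ne_zero (ofReal_ne_zero.mpr hx.ne'),
    cpow_def_of_ne_zero (ofReal_ne_zero.mpr hw.ne'), ← ofReal_log hsqrt.le, ← ofReal_log hx.le,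
    ← ofReal_log hw.le, Real.log_sqrt (by positivity), Real.log_div hx.ne' hw.ne',
    ← Complex.exp_add]
  push_cast
  ring_nf

section WhittakerIntegrand

variable {Z : ℕ → ℂ} {y τ : ℕ → ℝ}

lemma prod_cpow_telescope (K : ℕ) (hZ : Z 0 = 0) (hy : ∀ j < K + 1, 0 < y j)
    (hτ : ∀ j < K + 1, 0 < τ j) :
    (∏ j ∈ Finset.range K, ((y (j + 1) * Real.sqrt (τ (j + 1) / τ j) : ℝ) : ℂ) ^ (-Z (j + 1))) *
        (τ K : ℂ) ^ (Z (K + 1) / 2) =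
      ∏ j ∈ Finset.range (K + 1), ((y j : ℂ) ^ (-Z j) * (τ j : ℂ) ^ ((Z (j + 1) - Z j) / 2)) := by
  induction K with
  | zero => simp [hZ]
  | succ K ih =>
    rw [Finset.prod_range_succ, Finset.prod_range_succ _ (K + 1),
      ← ih (fun j hj => hy j (by omega)) fun j hj => hτ j (by omega), ofReal_mul,
      mul_cpow_ofReal_nonneg (hy _ (by omega)).le (Real.sqrt_nonneg _),
      ofReal_sqrt_div_cpow (hτ _ (by omega)) (hτ _ (by omega)), neg_neg, sub_div, sub_eq_neg_add,
      cpow_add _ _ (ofReal_ne_zero.mpr (hτ (K + 1) (by omega)).ne')]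
    ring_nf

lemma prod_cpow_mul_cpow_eq (K : ℕ) {x : ℂ} (hx : x ≠ 0) (δ : ℂ) (hZ : Z 0 = 0) :
    (∏ j ∈ Finset.range (K + 1), x ^ ((K + 1 - j) * δ)) * x ^ (Z (K + 1) / 2) =
      ∏ j ∈ Finset.range (K + 1), x ^ ((Z (j + 1) - Z j + (K + 2) * δ) / 2) := by
  have hsum (m : ℕ) : ∑ j ∈ Finset.range m, (Z (j + 1) - Z j + (K + 2) * δ) / 2 =
      ∑ j ∈ Finset.range m, ((K : ℂ) + 1 - j) * δ + Z m / 2 + m * (m - 1 - K) / 2 * δ := by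
    induction m with
    | zero => simp [hZ]
    | succ m ih =>
      rw [Finset.sum_range_succ, Finset.sum_range_succ, ih]
      push_cast
      ring
  rw [prod_cpow_const _ hx, prod_cpow_const _ hx, ← cpow_add _ _ hx, hsum]
  congr 1
  push_cast
  ring

lemma besselIntegrand_sub_add {x t : ℝ} (hx : 0 < x) (ht : 0 < t) (z w u v : ℂ) :
    besselIntegrand (z - u) (w + v) x t =
      (x : ℂ) ^ (-z) * (t : ℂ) ^ ((w - z) / 2) * (Real.pi : ℂ) ^ ((w - z + (u + v)) / 2) *
        (cexp (((-(Real.pi * x) ^ 2 * t - 1 / t : ℝ) : ℂ)) *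
          (x : ℂ) ^ u * (t : ℂ) ^ ((u + v) / 2)) * (t : ℂ)⁻¹ := by
  have hx0 := ofReal_ne_zero.mpr hx.ne'
  have ht0 := ofReal_ne_zero.mpr ht.ne'
  have hexp : cexp (((-(Real.pi * x) ^ 2 * t - 1 / t : ℝ) : ℂ)) =
      cexp (-((Real.pi ^ 2 * x ^ 2 * t : ℝ) : ℂ)) * cexp (-((t⁻¹ : ℝ) : ℂ)) := by
    rw [← Complex.exp_add]
    push_cast
    ring_nf
  rw [besselIntegrand, expInvIntegrand, hexp, show -(z - u) = -z + u by ring,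
    show (w + v - (z - u)) / 2 = (w - z) / 2 + (u + v) / 2 by ring,
    show (w - z + (u + v)) / 2 = (w - z) / 2 + (u + v) / 2 by ring,
    cpow_sub _ _ ht0, cpow_one, cpow_add _ _ hx0, cpow_add _ _ ht0]
  ring

lemma whittaker_factor_eq {K j : ℕ} (hj : j ≤ K + 1) (δ : ℂ) {x : ℝ} (hx : 0 < x) (t : ℝ) :
    cexp (((-(Real.pi * x) ^ 2 * t - 1 / t : ℝ) : ℂ)) *
        ((Real.pi * x : ℝ) : ℂ) ^ ((((K + 1 - j : ℕ) : ℂ) * ((K + 1) * δ)) / ((K + 1 : ℕ) : ℂ)) *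
        (t : ℂ) ^ ((((K + 2 : ℕ) : ℂ) * ((K + 1) * δ)) / (2 * ((K + 1 : ℕ) : ℂ))) =
      (Real.pi : ℂ) ^ ((K + 1 - j) * δ) *
        (cexp (((-(Real.pi * x) ^ 2 * t - 1 / t : ℝ) : ℂ)) *
          (x : ℂ) ^ ((K + 1 - j) * δ) * (t : ℂ) ^ ((K + 2) * δ / 2)) := by
  have hK : (K : ℂ) + 1 ≠ 0 := by exact_mod_cast K.succ_ne_zero
  have hexponent : (((K + 1 - j : ℕ) : ℂ) * ((K + 1) * δ)) / ((K + 1 : ℕ) : ℂ) =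
      (K + 1 - j) * δ := by
    rw [Nat.cast_sub hj]
    push_cast
    field_simp
  have hexponent' : (((K + 2 : ℕ) : ℂ) * ((K + 1) * δ)) / (2 * ((K + 1 : ℕ) : ℂ)) =
      (K + 2) * δ / 2 := by
    push_cast
    field_simp
  rw [hexponent, hexponent', ofReal_mul, mul_cpow_ofReal_nonneg Real.pi_pos.le hx.le]
  ring

lemma whittaker_integrand_eq_prod_besselIntegrand (K : ℕ) (α S : ℂ) (hZ0 : Z 0 = 0)
    (hZ : Z (K + 1) = -S) (hy : ∀ j < K + 1, 0 < y j) (hτ : ∀ j < K + 1, 0 < τ j) :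
    (∏ j ∈ Finset.range K, ((y (j + 1) * Real.sqrt (τ (j + 1) / τ j) : ℝ) : ℂ) ^ (-Z (j + 1))) *
        (∏ j ∈ Finset.range (K + 1),
          cexp (((-(Real.pi * y j) ^ 2 * τ j - 1 / τ j : ℝ) : ℂ)) *
            ((Real.pi * y j : ℝ) : ℂ) ^ ((((K + 1 - j : ℕ) : ℂ) * α) / ((K + 1 : ℕ) : ℂ)) *
            ((τ j : ℝ) : ℂ) ^ ((((K + 2 : ℕ) : ℂ) * α) / (2 * ((K + 1 : ℕ) : ℂ)))) *
        ((Real.pi * τ K : ℝ) : ℂ) ^ (-S / 2) *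
        (∏ j ∈ Finset.range (K + 1), ((τ j : ℝ) : ℂ))⁻¹ =
      ∏ j ∈ Finset.range (K + 1), besselIntegrand (Z j + j * (α / (K + 1)) - α)
        (Z (j + 1) + (j + 1 : ℕ) * (α / (K + 1))) (y j) (τ j) := by
  have hK : (K : ℂ) + 1 ≠ 0 := by exact_mod_cast K.succ_ne_zero
  have hπ : (Real.pi : ℂ) ≠ 0 := ofReal_ne_zero.mpr Real.pi_ne_zero
  obtain ⟨δ, rfl⟩ : ∃ δ, α = (K + 1) * δ := ⟨α / (K + 1), by field_simp⟩
  have hbessel : ∀ j ∈ Finset.range (K + 1),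
      besselIntegrand (Z j + j * ((K + 1) * δ / (K + 1)) - (K + 1) * δ)
          (Z (j + 1) + (j + 1 : ℕ) * ((K + 1) * δ / (K + 1))) (y j) (τ j) =
        (y j : ℂ) ^ (-Z j) * (τ j : ℂ) ^ ((Z (j + 1) - Z j) / 2) *
          (Real.pi : ℂ) ^ ((Z (j + 1) - Z j + (K + 2) * δ) / 2) *
          (cexp (((-(Real.pi * y j) ^ 2 * τ j - 1 / τ j : ℝ) : ℂ)) *
            (y j : ℂ) ^ ((K + 1 - j) * δ) * (τ j : ℂ) ^ ((K + 2) * δ / 2)) * (τ j : ℂ)⁻¹ := by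
    intro j hj
    have hj := Finset.mem_range.1 hj
    rw [mul_div_cancel_left₀ _ hK,
      show Z j + j * δ - (K + 1) * δ = Z j - (K + 1 - j) * δ by ring,
      besselIntegrand_sub_add (hy j hj) (hτ j hj),
      show (K + 1 - j) * δ + (j + 1 : ℕ) * δ = (K + 2) * δ by push_cast; ring]
  have hwhittaker (j : ℕ) (hj : j ∈ Finset.range (K + 1)) :=
    whittaker_factor_eq (Finset.mem_range.1 hj).le δ (hy j (Finset.mem_range.1 hj)) (τ j)
  rw [Finset.prod_congr rfl hbessel, Finset.prod_congr rfl hwhittaker]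
  simp only [Finset.prod_mul_distrib]
  rw [← Finset.prod_mul_distrib (f := fun j => (y j : ℂ) ^ (-Z j)),
    ← prod_cpow_telescope K hZ0 hy hτ, ← prod_cpow_mul_cpow_eq K hπ δ hZ0, ofReal_mul,
    mul_cpow_ofReal_nonneg Real.pi_pos.le (hτ _ K.lt_succ_self).le, hZ, Finset.prod_inv_distrib]
  ring

end WhittakerIntegrand

lemma measurableSet_posSet (k : ℕ) : MeasurableSet (posSet k) := by
  simp only [posSet]
  measurability

lemma volume_restrict_posSet (k : ℕ) : (volume : Measure (Fin k → ℝ)).restrict (posSet k) =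
    Measure.pi fun _ => (volume : Measure ℝ).restrict (Set.Ioi 0) := by
  rw [← Measure.restrict_pi_pi, volume_pi]
  congr 1
  ext t
  simp [posSet]

lemma extR_apply {k : ℕ} (t : Fin k → ℝ) (j : Fin k) : extR t j = t j := by simp [extR]

lemma extR_pos {k : ℕ} {t : Fin k → ℝ} (ht : t ∈ posSet k) {j : ℕ} (hj : j < k) :
    0 < extR t j := by simpa [extR, hj] using ht ⟨j, hj⟩

@[fun_prop]
lemma measurable_extR0 (k i : ℕ) : Measurable fun t : Fin k → ℝ => extR0 t i := by
  unfold extR0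
  split_ifs <;> fun_prop

lemma integral_fin_zero (f : (Fin 0 → ℝ) → ℂ) : ∫ t, f t = f default := by
  rw [Measure.volume_pi_eq_dirac default, integral_dirac]

lemma Ufun_one (a s : ℕ → ℂ) : Ufun 1 a s = 1 := by
  have huniv : posSet (1 - 1) = Set.univ := Set.eq_univ_of_forall fun t j => j.elim0
  rw [Ufun, huniv, setIntegral_univ, integral_fin_zero]
  simp [WhittAr]

/-- The point with abscissas `c` and ordinates `t` on a product of vertical lines; beyond the
entries of `t` the ordinates are `0`. -/
def verticalLine {k : ℕ} (c : ℕ → ℝ) (t : Fin k → ℝ) : ℕ → ℂ :=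
  fun i => (c i : ℂ) + (extR0 t i : ℝ) * I

lemma verticalLine_apply {k : ℕ} (c : ℕ → ℝ) (t : Fin k → ℝ) (j : Fin k) :
    verticalLine c t j = c j + t j * I := by simp [verticalLine, extR0]

lemma verticalLine_re {k : ℕ} (c : ℕ → ℝ) (t : Fin k → ℝ) (i : ℕ) :
    (verticalLine c t i).re = c i := by simp [verticalLine]

@[fun_prop]
lemma measurable_verticalLine (c : ℕ → ℝ) (k i : ℕ) :
    Measurable fun t : Fin k → ℝ => verticalLine c t i := by
  simp only [verticalLine]
  fun_prop

lemma tildeA_eq (k : ℕ) (a : ℕ → ℂ) (j : ℕ) :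
    tildeA (k + 2) a j = a (j + 1) + a 0 / (k + 1) := by
  simp only [tildeA]
  congr 2
  push_cast
  ring

lemma sumA_tildeA (k : ℕ) (a : ℕ → ℂ) : sumA (k + 1) (tildeA (k + 2) a) = sumA (k + 2) a := by
  have hk : (k : ℂ) + 1 ≠ 0 := by exact_mod_cast k.succ_ne_zero
  simp only [sumA, tildeA_eq, Finset.sum_add_distrib, Finset.sum_range_succ' a (k + 1),
    Finset.sum_const, Finset.card_range, nsmul_eq_mul]
  push_cast
  field_simp

lemma div_natCast_add_one_re (z : ℂ) (k : ℕ) : (z / (k + 1)).re = z.re / (k + 1) := by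
  exact_mod_cast div_natCast_re z (k + 1)

lemma tildeA_re {k : ℕ} {a : ℕ → ℂ} (ha : ∀ j < k + 2, (a j).re = 0) :
    ∀ j < k + 1, (tildeA (k + 2) a j).re = 0 := by
  intro j hj
  rw [tildeA_eq, add_re, div_natCast_add_one_re, ha 0 (by omega), ha (j + 1) (by omega)]
  simp

lemma sumA_re {n : ℕ} {a : ℕ → ℂ} (ha : ∀ j < n, (a j).re = 0) : (sumA n a).re = 0 := by
  rw [sumA, re_sum]
  exact Finset.sum_eq_zero fun j hj => ha j (Finset.mem_range.1 hj)

lemma PextL_succ (a p : ℕ → ℂ) {m j : ℕ} (hj : j < m) : PextL (m + 1) a p (j + 1) = p j := by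
  simp [PextL, Nat.succ_le_iff.2 hj]

lemma PextL_last (a p : ℕ → ℂ) (m : ℕ) : PextL (m + 1) a p (m + 1) = -sumA (m + 1) a := by
  simp [PextL]

/-- The tuple `(0, z_1, …, z_k, -|ã|)` shifted by the multiples `i a_1/(k+1)` of `a_1/(k+1)`, where
`z_j = e + i t_j` are Mellin variables for `ã`. The Mellin transform `U_{k+2,a}(s)` is an average
over `z` of Gamma factors whose poles are governed by consecutive entries of this tuple. -/
def shiftedVar (k : ℕ) (a : ℕ → ℂ) (e : ℝ) (t : Fin k → ℝ) (i : ℕ) : ℂ :=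
  PextL (k + 1) (tildeA (k + 2) a) (verticalLine (fun _ => e) t) i + i * (a 0 / (k + 1))

section ShiftedVar

variable {k : ℕ} (a : ℕ → ℂ) (e : ℝ) (t : Fin k → ℝ)

lemma shiftedVar_zero : shiftedVar k a e t 0 = 0 := by
  simp [shiftedVar, PextL]

lemma shiftedVar_last : shiftedVar k a e t (k + 1) = a 0 - sumA (k + 2) a := by
  have hk : (k : ℂ) + 1 ≠ 0 := by exact_mod_cast k.succ_ne_zero
  simp only [shiftedVar, PextL, sumA_tildeA, k.succ_ne_zero, if_false, Nat.add_sub_cancel,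
    Nat.not_succ_le_self, Nat.cast_add, Nat.cast_one]
  field_simp
  ring

variable {a} in
lemma shiftedVar_re (ha : ∀ j < k + 2, (a j).re = 0) (i : ℕ) :
    (shiftedVar k a e t i).re = if 0 < i ∧ i ≤ k then e else 0 := by
  have hshift : ((i : ℂ) * (a 0 / (k + 1))).re = 0 := by
    rw [← ofReal_natCast, re_ofReal_mul, div_natCast_add_one_re, ha 0 (by omega)]
    simp
  rw [shiftedVar, add_re, hshift, add_zero]
  simp only [PextL, sumA_tildeA, Nat.add_sub_cancel]
  split_ifs <;> simp_all [sumA_re, verticalLine_re]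

variable {a} in
lemma shiftedVar_sub_re (ha : ∀ j < k + 2, (a j).re = 0) (i : ℕ) :
    (shiftedVar k a e t i - a 0).re = if 0 < i ∧ i ≤ k then e else 0 := by
  rw [sub_re, shiftedVar_re e t ha, ha 0 (by omega), sub_zero]

@[fun_prop]
lemma measurable_shiftedVar (k i : ℕ) : Measurable fun t : Fin k → ℝ => shiftedVar k a e t i := by
  simp only [shiftedVar, PextL]
  split_ifs <;> fun_prop

end ShiftedVar

/-! ### Mellin inversion for Whittaker functions -/

/-- Mellin inversion for the Whittaker function on `GL_{n+1}`: its Mellin transform is integrable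
on the product of the vertical lines with abscissas `c`, and its inverse Mellin transform there is
the Whittaker function. -/
structure IsMellinInvertible (n : ℕ) (a : ℕ → ℂ) (c : ℕ → ℝ) : Prop where
  integrable : Integrable fun t : Fin n → ℝ => Ufun (n + 1) a (verticalLine c t)
  whittAr_eq {y : ℕ → ℝ} (hy : ∀ j < n, 0 < y j) :
    WhittAr (n + 1) a y = ((2 * Real.pi) ^ n : ℂ)⁻¹ * ∫ t : Fin n → ℝ,
      Ufun (n + 1) a (verticalLine c t) * ∏ j : Fin n, (y j : ℂ) ^ (-verticalLine c t j)

lemma isMellinInvertible_zero (a : ℕ → ℂ) (c : ℕ → ℝ) : IsMellinInvertible 0 a c := by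
  constructor
  · simp only [zero_add, Ufun_one, Measure.volume_pi_eq_dirac default]
    exact integrable_dirac (by simp)
  · intro y _
    rw [integral_fin_zero]
    simp [Ufun_one, WhittAr]

section Recursion

variable {k : ℕ} {a : ℕ → ℂ} {e : ℝ}

lemma whittaker_recursion_integrand_eq {y : ℕ → ℝ} (hy : ∀ j < k + 2, 0 < y j)
    (h : IsMellinInvertible (k + 1) (tildeA (k + 3) a) (fun _ => e)) {τ : Fin (k + 2) → ℝ}
    (hτ : τ ∈ posSet (k + 2)) :
    WhittAr (k + 2) (tildeA (k + 3) a)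
          (fun j => y (j + 1) * Real.sqrt (extR τ (j + 1) / extR τ j)) *
        (∏ j ∈ Finset.range (k + 2),
          cexp (((-(Real.pi * y j) ^ 2 * extR τ j - 1 / extR τ j : ℝ) : ℂ)) *
            ((Real.pi * y j : ℝ) : ℂ) ^ ((((k + 2 - j : ℕ) : ℂ) * a 0) / ((k + 2 : ℕ) : ℂ)) *
            ((extR τ j : ℝ) : ℂ) ^ ((((k + 3 : ℕ) : ℂ) * a 0) / (2 * ((k + 2 : ℕ) : ℂ)))) *
        ((Real.pi * extR τ (k + 1) : ℝ) : ℂ) ^ (-(sumA (k + 3) a) / 2) *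
        (∏ j ∈ Finset.range (k + 2), ((extR τ j : ℝ) : ℂ))⁻¹ =
      ((2 * Real.pi) ^ (k + 1) : ℂ)⁻¹ * ∫ t : Fin (k + 1) → ℝ,
        Ufun (k + 2) (tildeA (k + 3) a) (verticalLine (fun _ => e) t) * ∏ j : Fin (k + 2),
          besselIntegrand (shiftedVar (k + 1) a e t j - a 0)
            (shiftedVar (k + 1) a e t (j + 1)) (y j) (τ j) := by
  have hτ' (j : ℕ) (hj : j < k + 2) : 0 < extR τ j := extR_pos hτ hj
  have harg (j : ℕ) (hj : j < k + 1) :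
      0 < y (j + 1) * Real.sqrt (extR τ (j + 1) / extR τ j) :=
    mul_pos (hy _ (by omega)) (Real.sqrt_pos.2 (div_pos (hτ' _ (by omega)) (hτ' _ (by omega))))
  rw [h.whittAr_eq harg, mul_assoc, mul_assoc, mul_assoc, ← integral_mul_const]
  congr 2 with t
  rw [mul_assoc]
  congr 1
  have hregroup := whittaker_integrand_eq_prod_besselIntegrand (k + 1) (a 0) (sumA (k + 3) a)
    (Z := PextL (k + 2) (tildeA (k + 3) a) (verticalLine (fun _ => e) t)) (y := y) (τ := extR τ)
    (by simp [PextL]) (by simp [PextL, ← sumA_tildeA]) hy hτ'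
  rw [Finset.prod_range, Finset.prod_range (f := fun j => besselIntegrand _ _ (y j) _)] at hregroup
  simp only [PextL_succ _ _ (Fin.is_lt _), verticalLine_apply, extR_apply] at hregroup ⊢
  rw [← mul_assoc, ← mul_assoc]
  exact hregroup

lemma WhittAr_eq_integral_besselKernel (ha : ∀ j < k + 2, (a j).re = 0)
    (h : IsMellinInvertible k (tildeA (k + 2) a) (fun _ => e)) {y : ℕ → ℝ}
    (hy : ∀ j < k + 1, 0 < y j) :
    WhittAr (k + 2) a y = ((2 * Real.pi) ^ k : ℂ)⁻¹ * ∫ t : Fin k → ℝ,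
      Ufun (k + 1) (tildeA (k + 2) a) (verticalLine (fun _ => e) t) * ∏ j : Fin (k + 1),
        besselKernel (shiftedVar k a e t j - a 0)
          (shiftedVar k a e t (j + 1)) (y j) := by
  rcases k with _ | k
  · have hlast (t : Fin 0 → ℝ) : shiftedVar 0 a e t 1 = -a 1 := by
      simpa [sumA, Finset.sum_range_succ] using shiftedVar_last a e t
    rw [integral_fin_zero]
    simp [Ufun_one, shiftedVar_zero, hlast, WhittAr_two_eq_besselKernel a y (hy 0 one_pos)]
  · rw [WhittAr, setIntegral_congr_fun (measurableSet_posSet _) fun τ hτ =>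
        whittaker_recursion_integrand_eq hy h hτ, integral_const_mul, volume_restrict_posSet,
      integral_integral_mul_prod h.integrable fun j : Fin (k + 2) =>
        isL1BoundedKernel_besselIntegrand (by fun_prop) (by fun_prop)
          (shiftedVar_sub_re e · ha j) (shiftedVar_re e · ha (j + 1)) (hy j j.2)]
    rfl

lemma Ufun_eq_integral (ha : ∀ j < k + 2, (a j).re = 0)
    (h : IsMellinInvertible k (tildeA (k + 2) a) (fun _ => e)) (he : 0 < e) {s : ℕ → ℂ}
    (hs : ∀ j < k + 1, e < (s j).re) :
    Ufun (k + 2) a s = ((2 * Real.pi) ^ k : ℂ)⁻¹ * ∫ t : Fin k → ℝ,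
      Ufun (k + 1) (tildeA (k + 2) a) (verticalLine (fun _ => e) t) * ∏ j : Fin (k + 1),
        (1 / 2 * (Gammaℝ (s j - (shiftedVar k a e t j - a 0)) *
          Gammaℝ (s j - shiftedVar k a e t (j + 1)))) := by
  have hlt (i j : ℕ) (hj : j < k + 1) : (if 0 < i ∧ i ≤ k then e else 0) < (s j).re := by
    split_ifs
    exacts [hs j hj, he.trans (hs j hj)]
  have hintegrand : ∀ y ∈ posSet (k + 1), WhittAr (k + 2) a (extR y) *
      ∏ j ∈ Finset.range (k + 1), ((extR y j : ℝ) : ℂ) ^ s j / ((extR y j : ℝ) : ℂ) =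
      ((2 * Real.pi) ^ k : ℂ)⁻¹ * ∫ t : Fin k → ℝ,
      Ufun (k + 1) (tildeA (k + 2) a) (verticalLine (fun _ => e) t) * ∏ j : Fin (k + 1),
        ((y j : ℂ) ^ (s j - 1) *
          besselKernel (shiftedVar k a e t j - a 0)
            (shiftedVar k a e t (j + 1)) (y j)) := by
    intro y hy
    rw [WhittAr_eq_integral_besselKernel ha h fun j hj => extR_pos hy hj, Finset.prod_range,
      mul_assoc, ← integral_mul_const]
    congr 2 with t
    rw [mul_assoc, ← Finset.prod_mul_distrib]
    congr 1
    refine Finset.prod_congr rfl fun j _ => ?_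
    rw [extR_apply, cpow_sub _ _ (ofReal_ne_zero.mpr (hy j).ne'), cpow_one, mul_comm]
  rw [Ufun, Nat.add_sub_cancel (k + 1) 1, setIntegral_congr_fun (measurableSet_posSet _) hintegrand,
    integral_const_mul, volume_restrict_posSet, integral_integral_mul_prod h.integrable
      fun j : Fin (k + 1) => isL1BoundedKernel_cpow_mul_besselKernel (by fun_prop) (by fun_prop)
          (shiftedVar_sub_re e · ha j) (shiftedVar_re e · ha (j + 1)) (hlt j j j.2)
          (hlt (j + 1) j j.2)]
  congr 2 with t
  congr 1
  refine Finset.prod_congr rfl fun j _ => ?_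
  exact (hasMellin_besselKernel (by rw [shiftedVar_sub_re e t ha]; exact hlt j j j.2)
    (by rw [shiftedVar_re e t ha]; exact hlt (j + 1) j j.2)).2

lemma Ufun_verticalLine_mul_prod_cpow_eq (ha : ∀ j < k + 2, (a j).re = 0)
    (h : IsMellinInvertible k (tildeA (k + 2) a) (fun _ => e)) (he : 0 < e) {c : ℕ → ℝ}
    (hc : ∀ i < k + 1, e < c i) (y : ℕ → ℝ) (x : Fin (k + 1) → ℝ) :
    Ufun (k + 2) a (verticalLine c x) * ∏ j : Fin (k + 1), (y j : ℂ) ^ (-verticalLine c x j) =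
      ((2 * Real.pi) ^ k : ℂ)⁻¹ * ∫ t : Fin k → ℝ,
        Ufun (k + 1) (tildeA (k + 2) a) (verticalLine (fun _ => e) t) * ∏ j : Fin (k + 1),
          (Gammaℝ (c j + x j * I - (shiftedVar k a e t j - a 0)) *
            Gammaℝ (c j + x j * I - shiftedVar k a e t (j + 1)) *
            (1 / 2 * (y j : ℂ) ^ (-(c j + x j * I)))) := by
  rw [Ufun_eq_integral ha h he fun j hj => by rw [verticalLine_re]; exact hc j hj, mul_assoc,
    ← integral_mul_const]
  simp only [verticalLine_apply, mul_assoc, ← Finset.prod_mul_distrib]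
  congr! 5
  ring

lemma isMellinInvertible_succ (ha : ∀ j < k + 2, (a j).re = 0)
    (h : IsMellinInvertible k (tildeA (k + 2) a) (fun _ => e)) (he : 0 < e) {c : ℕ → ℝ}
    (hc : ∀ i < k + 1, e < c i) : IsMellinInvertible (k + 1) a c := by
  have hlt (i : ℕ) {j : ℕ} (hj : j < k + 1) : (if 0 < i ∧ i ≤ k then e else 0) < c j := by
    split_ifs
    exacts [hc j hj, he.trans (hc j hj)]
  have hkernel {y : ℕ → ℝ} (hy : ∀ j < k + 1, 0 < y j) (j : Fin (k + 1)) :=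
    isL1BoundedKernel_Gammaℝ_mul_Gammaℝ_mul (q := c j) (A := fun t => shiftedVar k a e t j - a 0)
      (B := fun t => shiftedVar k a e t (j + 1))
      (g := fun x : ℝ => 1 / 2 * (y j : ℂ) ^ (-(c j + x * I)))
      (by fun_prop) (by fun_prop) (shiftedVar_sub_re e · ha j) (shiftedVar_re e · ha (j + 1))
      (hlt j j.2) (hlt (j + 1) j.2) (by fun_prop) (M := 1 / 2 * y j ^ (-c j)) fun x => by
        rw [norm_mul, norm_cpow_eq_rpow_re_of_pos (hy j j.2)]
        simp
  constructor
  · have hint := integrable_integral_mul_prod h.integrable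
      (hkernel (y := fun _ => 1) fun _ _ => one_pos)
    refine (hint.const_mul ((2 * Real.pi) ^ k : ℂ)⁻¹).congr (.of_forall fun x => ?_)
    exact (Ufun_verticalLine_mul_prod_cpow_eq ha h he hc (fun _ => 1) x).symm.trans (by simp)
  · intro y hy
    have hinv (j : Fin (k + 1)) (t : Fin k → ℝ) :
        ∫ x : ℝ, Gammaℝ (c j + x * I - (shiftedVar k a e t j - a 0)) *
          Gammaℝ (c j + x * I - shiftedVar k a e t (j + 1)) *
            (1 / 2 * (y j : ℂ) ^ (-(c j + x * I))) =
          2 * Real.pi * besselKernel (shiftedVar k a e t j - a 0)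
            (shiftedVar k a e t (j + 1)) (y j) := by
      rw [← integral_cpow_mul_Gammaℝ_mul_Gammaℝ (c := c j)
        (by rw [shiftedVar_sub_re e t ha]; exact hlt j j.2)
        (by rw [shiftedVar_re e t ha]; exact hlt (j + 1) j.2) (hy j j.2)]
      congr 1 with x
      ring
    simp only [Ufun_verticalLine_mul_prod_cpow_eq ha h he hc, integral_const_mul]
    rw [volume_pi, integral_integral_mul_prod h.integrable (hkernel hy),
      WhittAr_eq_integral_besselKernel ha h hy]
    simp only [hinv, Finset.prod_mul_distrib, Finset.prod_const, Finset.card_univ,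
      Fintype.card_fin, mul_left_comm (Ufun _ _ _), integral_const_mul]
    have : (Real.pi : ℂ) ≠ 0 := ofReal_ne_zero.mpr Real.pi_ne_zero
    field_simp
    ring

end Recursion

lemma eventually_forall_lt (m : ℕ) {c : ℕ → ℝ} (hc : ∀ i < m, 0 < c i) :
    ∀ᶠ e in 𝓝[>] 0, ∀ i < m, e < c i :=
  (Filter.eventually_all_finite (Set.finite_lt_nat m)).2 fun i hi =>
    nhdsWithin_le_nhds (Iio_mem_nhds (hc i hi))

theorem isMellinInvertible (n : ℕ) {a : ℕ → ℂ} (ha : ∀ j < n + 1, (a j).re = 0) {c : ℕ → ℝ}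
    (hc : ∀ i < n, 0 < c i) : IsMellinInvertible n a c := by
  induction n generalizing a c with
  | zero => exact isMellinInvertible_zero a c
  | succ k ih =>
    obtain ⟨e, hec, he⟩ := ((eventually_forall_lt (k + 1) hc).and self_mem_nhdsWithin).exists
    exact isMellinInvertible_succ ha (ih (tildeA_re ha) fun _ _ => he) he hec

/-! ### Induction on the rank -/

lemma mul_prod_range_telescope {M : Type*} [CommMonoid M] (f g h : ℕ → M) (k : ℕ) :
    f 0 * g k * ∏ j ∈ Finset.range k, (f (j + 1) * g j * h j) =
      f k * g 0 * ∏ j ∈ Finset.range k, (f j * g (j + 1) * h j) := by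
  have hf : f 0 * ∏ j ∈ Finset.range k, f (j + 1) = f k * ∏ j ∈ Finset.range k, f j := by
    rw [mul_comm, ← Finset.prod_range_succ', Finset.prod_range_succ, mul_comm]
  have hg : g k * ∏ j ∈ Finset.range k, g j = g 0 * ∏ j ∈ Finset.range k, g (j + 1) := by
    rw [mul_comm, ← Finset.prod_range_succ, Finset.prod_range_succ', mul_comm]
  simp only [Finset.prod_mul_distrib]
  rw [← mul_assoc, mul_mul_mul_comm, hf, hg, mul_mul_mul_comm, mul_assoc]

lemma mul_prod_range_mul_prod_range_succ {M : Type*} [CommMonoid M] (f g r s : ℕ → M) (k : ℕ) :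
    f 0 * (∏ j ∈ Finset.range k, (g j * f (j + 1))) * ∏ j ∈ Finset.range (k + 1), (r j * s j) =
      f k * (r 0 * s k) * ∏ j ∈ Finset.range k, (g j * f j * (r (j + 1) * s j)) := by
  induction k with
  | zero => simp
  | succ k ih =>
    simp only [Finset.prod_range_succ] at ih ⊢
    calc _ = f 0 * (∏ j ∈ Finset.range k, (g j * f (j + 1))) *
            ((∏ j ∈ Finset.range k, (r j * s j)) * (r k * s k)) *
            (g k * f (k + 1) * (r (k + 1) * s (k + 1))) := by ac_rfl
      _ = _ := by
        rw [ih]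
        ac_rfl

lemma Gammaℝ_mul_prod_barnesQuotient (k : ℕ) {X P : ℕ → ℂ} {α σ : ℂ} (hX₀ : X 0 = 0)
    (hXl : X (k + 1) = α + P (k + 2)) (hne : Gammaℝ (P (k + 1) + σ - X k) ≠ 0) :
    Gammaℝ (σ - α) * Gammaℝ (P 1 + α) * Gammaℝ (P (k + 1) - X (k + 1)) *
        Gammaℝ (X (k + 1) + σ - X k) * ∏ j : Fin k,
          barnesQuotient (X (j + 1)) (X j - σ) (P (j + 2) + α) (P (j + 1)) =
      Gammaℝ (P 1 + σ) * ∏ j : Fin (k + 1),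
        barnesQuotient (X j - α) (X (j + 1)) (P (j + 1)) (P (j + 2) + σ) := by
  let f (j : ℕ) : ℂ := Gammaℝ (P (j + 1) + α - X j)
  let g (j : ℕ) : ℂ := Gammaℝ (P (j + 1) + σ - X j)
  let h (j : ℕ) : ℂ := Gammaℝ (P (j + 1) - X (j + 1)) * Gammaℝ (P (j + 2) + α + σ - X j) /
    Gammaℝ (P (j + 1) + P (j + 2) + α + σ - X j - X (j + 1))
  have hleft (j : ℕ) : barnesQuotient (X (j + 1)) (X j - σ) (P (j + 2) + α) (P (j + 1)) =
      f (j + 1) * g j * h j := by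
    simp only [barnesQuotient, f, g, h]
    ring_nf
  have hright (j : ℕ) : barnesQuotient (X j - α) (X (j + 1)) (P (j + 1)) (P (j + 2) + σ) =
      f j * g (j + 1) * h j := by
    simp only [barnesQuotient, f, g, h]
    ring_nf
  have hlast : f k * g (k + 1) * h k * g k = f k *
      Gammaℝ (σ - α) * Gammaℝ (P (k + 1) - X (k + 1)) * Gammaℝ (X (k + 1) + σ - X k) := by
    have hden : P (k + 1) + (P (k + 2) + σ) - (X k - α) - X (k + 1) = P (k + 1) + σ - X k := by
      rw [hXl]
      ring
    rw [← hright, barnesQuotient, hden, div_mul_cancel₀ _ hne, hXl]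
    simp only [f]
    ring_nf
  have htel := mul_prod_range_telescope f g h k
  have hf₀ : f 0 = Gammaℝ (P 1 + α) := by simp [f, hX₀]
  have hg₀ : g 0 = Gammaℝ (P 1 + σ) := by simp [g, hX₀]
  simp only [hleft, hright, ← hf₀, ← hg₀]
  rw [← Finset.prod_range fun j => f (j + 1) * g j * h j,
    ← Finset.prod_range fun j => f j * g (j + 1) * h j, Finset.prod_range_succ]
  refine mul_right_cancel₀ (b := g k) hne ?_
  linear_combination Gammaℝ (σ - α) * Gammaℝ (P (k + 1) - X (k + 1)) *
    Gammaℝ (X (k + 1) + σ - X k) * htel -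
    g 0 * (∏ j ∈ Finset.range k, (f j * g (j + 1) * h j)) * hlast

section BarnesInduction

variable {k : ℕ} {a : ℕ → ℂ} {e : ℝ}

lemma shiftedVar_succ (a : ℕ → ℂ) (e : ℝ) (t : Fin k → ℝ) (j : Fin k) :
    shiftedVar k a e t (j + 1) = e + (j + 1) * (a 0 / (k + 1)) + t j * I := by
  rw [shiftedVar, PextL_succ _ _ j.2, verticalLine_apply]
  push_cast
  ring

lemma integral_Ufun_mul_Gammaℝ_mul_Gammaℝ (ha : ∀ j < k + 2, (a j).re = 0) (he : 0 < e)
    {c : ℕ → ℝ} (hec : ∀ i < k + 1, e < c i) {C D : ℕ → ℂ} (hC : ∀ j < k + 1, c j < (C j).re)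
    (hD : ∀ j < k + 1, c j < (D j).re) :
    ∫ x : Fin (k + 1) → ℝ, Ufun (k + 2) a (verticalLine c x) * ∏ j : Fin (k + 1),
        (Gammaℝ (C j - verticalLine c x j) * Gammaℝ (D j - verticalLine c x j)) =
      2 * Real.pi * ∫ t : Fin k → ℝ,
        Ufun (k + 1) (tildeA (k + 2) a) (verticalLine (fun _ => e) t) * ∏ j : Fin (k + 1),
          barnesQuotient (shiftedVar k a e t j - a 0) (shiftedVar k a e t (j + 1)) (C j) (D j) := by
  have hinv : IsMellinInvertible k (tildeA (k + 2) a) (fun _ => e) :=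
    isMellinInvertible k (tildeA_re ha) fun _ _ => he
  have hlt (i : ℕ) {j : ℕ} (hj : j < k + 1) : (if 0 < i ∧ i ≤ k then e else 0) < c j := by
    split_ifs
    exacts [hec j hj, he.trans (hec j hj)]
  have hbarnes := integral_integral_mul_prod_barnes (ι := Fin (k + 1)) hinv.integrable
    (A := fun j t => shiftedVar k a e t j - a 0) (B := fun j t => shiftedVar k a e t (j + 1))
    (C := fun j => C j) (D := fun j => D j) (q := fun j => c j) (by fun_prop) (by fun_prop)
    (fun j => (shiftedVar_sub_re e · ha j)) (fun j => (shiftedVar_re e · ha (j + 1)))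
    (fun j => hlt j j.2) (fun j => hlt (j + 1) j.2) (fun j => hC j j.2) (fun j => hD j j.2)
  have hintegrand (x : Fin (k + 1) → ℝ) : Ufun (k + 2) a (verticalLine c x) *
      ∏ j : Fin (k + 1), (Gammaℝ (C j - verticalLine c x j) * Gammaℝ (D j - verticalLine c x j)) =
      ((2 * Real.pi) ^ k : ℂ)⁻¹ * (1 / 2) ^ (k + 1) * ∫ t : Fin k → ℝ,
        Ufun (k + 1) (tildeA (k + 2) a) (verticalLine (fun _ => e) t) * ∏ j : Fin (k + 1),
          (Gammaℝ (c j + x j * I - (shiftedVar k a e t j - a 0)) *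
            Gammaℝ (c j + x j * I - shiftedVar k a e t (j + 1)) *
            (Gammaℝ (C j - (c j + x j * I)) * Gammaℝ (D j - (c j + x j * I)))) := by
    rw [Ufun_eq_integral ha hinv he fun j hj => by rw [verticalLine_re]; exact hec j hj, mul_assoc,
      mul_assoc, ← integral_mul_const, ← integral_const_mul ((1 / 2 : ℂ) ^ (k + 1))]
    congr 2 with t
    simp only [Finset.prod_mul_distrib, Finset.prod_const, Finset.card_univ, Fintype.card_fin,
      verticalLine_apply]
    ring
  have : (Real.pi : ℂ) ≠ 0 := ofReal_ne_zero.mpr Real.pi_ne_zero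
  have hconst : ((2 * Real.pi) ^ k : ℂ)⁻¹ * (1 / 2) ^ (k + 1) * (4 * Real.pi) ^ (k + 1) =
      2 * Real.pi := by
    rw [mul_assoc, ← mul_pow, show (1 / 2 : ℂ) * (4 * Real.pi) = 2 * Real.pi by ring, pow_succ]
    field_simp
  simp only [hintegrand]
  rw [integral_const_mul, hbarnes, Fintype.card_fin, ← mul_assoc, hconst]

/-- The contour integral identity for `U_{m+1,a}` at the point `p`, with denominators cleared and
the vertical lines with abscissas `c` parametrized by `ℝ`. -/
def BarnesIdentity (m : ℕ) (a : ℕ → ℂ) (σ : ℂ) (p : ℕ → ℂ) (c : ℕ → ℝ) : Prop :=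
  Ufun (m + 1) a p * ∏ j ∈ Finset.range (m + 1), Gammaℝ (σ - a j) =
    Gammaℝ (PextL (m + 1) a p 1 + σ) * (((4 * Real.pi) ^ m : ℂ)⁻¹ * ∫ t : Fin m → ℝ,
      Ufun (m + 1) a (verticalLine c t) * ∏ j : Fin m,
        (Gammaℝ (PextL (m + 1) a p (j + 1) - verticalLine c t j) *
          Gammaℝ (PextL (m + 1) a p (j + 2) + σ - verticalLine c t j)))

lemma BarnesIdentity.tildeA_verticalLine {e' : ℝ} {σ : ℂ} {x : Fin k → ℝ}
    (h : BarnesIdentity k (tildeA (k + 2) a) (σ + a 0 / (k + 1)) (verticalLine (fun _ => e') x)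
      (fun _ => e)) :
    Ufun (k + 1) (tildeA (k + 2) a) (verticalLine (fun _ => e') x) *
        ∏ j ∈ Finset.range (k + 1), Gammaℝ (σ - a (j + 1)) =
      Gammaℝ (shiftedVar k a e' x 1 + σ) * (((4 * Real.pi) ^ k : ℂ)⁻¹ * ∫ t : Fin k → ℝ,
        Ufun (k + 1) (tildeA (k + 2) a) (verticalLine (fun _ => e) t) * ∏ j : Fin k,
          (Gammaℝ (shiftedVar k a e' x (j + 1) - shiftedVar k a e t (j + 1)) *
            Gammaℝ (shiftedVar k a e' x (j + 2) + σ - shiftedVar k a e t (j + 1)))) := by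
  have hQ (i : ℕ) : PextL (k + 1) (tildeA (k + 2) a) (verticalLine (fun _ => e') x) i =
      shiftedVar k a e' x i - i * (a 0 / (k + 1)) := by simp [shiftedVar]
  have hz (t : Fin k → ℝ) (j : Fin k) : verticalLine (fun _ => e) t j =
      shiftedVar k a e t (j + 1) - (j + 1) * (a 0 / (k + 1)) := by
    rw [shiftedVar_succ, verticalLine_apply]
    ring
  simp only [BarnesIdentity, hQ, hz, tildeA_eq, add_sub_add_right_eq_sub] at h
  rw [h]
  push_cast
  ring_nf

lemma BarnesIdentity.tildeA_verticalLine_mul_prod {e' : ℝ} {σ : ℂ} {x : Fin k → ℝ}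
    (h : BarnesIdentity k (tildeA (k + 2) a) (σ + a 0 / (k + 1)) (verticalLine (fun _ => e') x)
      (fun _ => e)) (p : ℕ → ℂ) {q : ℕ → ℂ} (hq : ∀ j, q j = e' + (j + 1) * (a 0 / (k + 1))) :
    Ufun (k + 1) (tildeA (k + 2) a) (verticalLine (fun _ => e') x) *
        (∏ j ∈ Finset.range (k + 1), Gammaℝ (σ - a (j + 1))) *
        ∏ j : Fin (k + 1), (Gammaℝ (p j - (shiftedVar k a e' x j - a 0)) *
          Gammaℝ (p j - shiftedVar k a e' x (j + 1))) =
      ((4 * Real.pi) ^ k : ℂ)⁻¹ * (Gammaℝ (p 0 + a 0) * Gammaℝ (p k - (a 0 - sumA (k + 2) a))) *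
        ∫ t : Fin k → ℝ, Ufun (k + 1) (tildeA (k + 2) a) (verticalLine (fun _ => e) t) *
          Gammaℝ (a 0 - sumA (k + 2) a + σ - shiftedVar k a e t k) * ∏ j : Fin k,
            (Gammaℝ (q j + x j * I - shiftedVar k a e t (j + 1)) *
              Gammaℝ (q j + x j * I - (shiftedVar k a e t j - σ)) *
              (Gammaℝ (p (j + 1) + a 0 - (q j + x j * I)) *
                Gammaℝ (p j - (q j + x j * I)))) := by
  have hY (j : Fin k) : q j + x j * I = shiftedVar k a e' x (j + 1) := by rw [shiftedVar_succ, hq]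
  have hregroup (t : Fin k → ℝ) := mul_prod_range_mul_prod_range_succ
    (fun j => Gammaℝ (shiftedVar k a e' x (j + 1) + σ - shiftedVar k a e t j))
    (fun j => Gammaℝ (shiftedVar k a e' x (j + 1) - shiftedVar k a e t (j + 1)))
    (fun j => Gammaℝ (p j - (shiftedVar k a e' x j - a 0)))
    (fun j => Gammaℝ (p j - shiftedVar k a e' x (j + 1))) k
  simp only [Finset.prod_range, zero_add, shiftedVar_zero, shiftedVar_last, sub_zero, zero_sub,
    sub_neg_eq_add] at hregroup
  rw [h.tildeA_verticalLine, ← integral_const_mul, ← integral_const_mul, ← integral_mul_const,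
    ← integral_const_mul]
  congr 1 with t
  simp only [hY, sub_sub_eq_add_sub] at hregroup ⊢
  linear_combination ((4 * Real.pi) ^ k : ℂ)⁻¹ *
    Ufun (k + 1) (tildeA (k + 2) a) (verticalLine (fun _ => e) t) * hregroup t

lemma integrable_Ufun_mul_Gammaℝ_sub_shiftedVar {e : ℝ} {z : ℂ} (ha : ∀ j < k + 2, (a j).re = 0)
    (he : 0 < e) (hez : e < z.re) (i : ℕ) :
    Integrable fun t : Fin k → ℝ => Ufun (k + 1) (tildeA (k + 2) a) (verticalLine (fun _ => e) t) *
      Gammaℝ (z - shiftedVar k a e t i) := by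
  have hre (t : Fin k → ℝ) : (z - shiftedVar k a e t i).re =
      z.re - if 0 < i ∧ i ≤ k then e else 0 := by rw [sub_re, shiftedVar_re e t ha]
  have hpos : 0 < z.re - if 0 < i ∧ i ≤ k then e else 0 := by split_ifs <;> linarith
  refine (isMellinInvertible k (tildeA_re ha) fun _ _ => he).integrable.mul_bdd
    (c := ‖Gammaℝ ((z.re - if 0 < i ∧ i ≤ k then e else 0 : ℝ) : ℂ)‖)
    (Measurable.aestronglyMeasurable (by fun_prop)) (.of_forall fun t => ?_)
  rw [← hre t] at hpos ⊢
  exact norm_Gammaℝ_le hpos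

lemma Ufun_mul_prod_Gammaℝ_eq_integral {e' : ℝ} {σ : ℂ} {p : ℕ → ℂ}
    (ha : ∀ j < k + 2, (a j).re = 0) (he : 0 < e) (hee' : e < e') (heσ : e < σ.re)
    (hp : ∀ j < k + 1, e' < (p j).re)
    (h : ∀ x : Fin k → ℝ, BarnesIdentity k (tildeA (k + 2) a) (σ + a 0 / (k + 1))
      (verticalLine (fun _ => e') x) (fun _ => e)) :
    Ufun (k + 2) a p * ∏ j ∈ Finset.range (k + 1), Gammaℝ (σ - a (j + 1)) =
      1 / 2 * ((4 * Real.pi) ^ k : ℂ)⁻¹ *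
        (Gammaℝ (p 0 + a 0) * Gammaℝ (p k - (a 0 - sumA (k + 2) a))) *
        ∫ t : Fin k → ℝ, Ufun (k + 1) (tildeA (k + 2) a) (verticalLine (fun _ => e) t) *
          Gammaℝ (a 0 - sumA (k + 2) a + σ - shiftedVar k a e t k) * ∏ j : Fin k,
            barnesQuotient (shiftedVar k a e t (j + 1)) (shiftedVar k a e t j - σ)
              (p (j + 1) + a 0) (p j) := by
  have hF : Integrable fun t : Fin k → ℝ =>
      Ufun (k + 1) (tildeA (k + 2) a) (verticalLine (fun _ => e) t) *
        Gammaℝ (a 0 - sumA (k + 2) a + σ - shiftedVar k a e t k) :=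
    integrable_Ufun_mul_Gammaℝ_sub_shiftedVar ha he (by simpa [sumA_re ha, ha 0]) k
  let q (j : ℕ) : ℂ := e' + (j + 1) * (a 0 / (k + 1))
  have hq (j : ℕ) : (q j).re = e' := by
    simp [q, div_natCast_add_one_re, ha 0]
  have hlt (i : ℕ) : (if 0 < i ∧ i ≤ k then e else 0) < e' := by split_ifs <;> linarith
  have hbarnes := integral_integral_mul_prod_barnes (ι := Fin k) hF
    (A := fun j t => shiftedVar k a e t (j + 1)) (B := fun j t => shiftedVar k a e t j - σ)
    (C := fun j => p (j + 1) + a 0) (D := fun j => p j) (q := fun j => q j)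
    (by fun_prop) (by fun_prop) (fun j t => shiftedVar_re e t ha (j + 1))
    (fun j t => by rw [sub_re, shiftedVar_re e t ha]) (fun j => by rw [hq]; exact hlt (j + 1))
    (fun j => by rw [hq]; linarith [hlt j])
    (fun j => by rw [hq, add_re, ha 0 (by omega), add_zero]; exact hp (j + 1) (by omega))
    (fun j => by rw [hq]; exact hp j (by omega))
  have hint := integral_congr_ae (μ := volume) <| .of_forall fun x =>
    (h x).tildeA_verticalLine_mul_prod p (q := q) fun _ => rfl
  rw [integral_const_mul, hbarnes, Fintype.card_fin] at hint
  have hconst : ((2 * Real.pi) ^ k : ℂ)⁻¹ * (1 / 2) ^ (k + 1) =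
      1 / 2 * ((4 * Real.pi) ^ k : ℂ)⁻¹ := by
    rw [pow_succ, one_div, inv_pow, ← mul_assoc, ← mul_inv, ← mul_pow, mul_comm]
    ring_nf
  have : (Real.pi : ℂ) ≠ 0 := ofReal_ne_zero.mpr Real.pi_ne_zero
  rw [Ufun_eq_integral ha (isMellinInvertible k (tildeA_re ha) fun _ _ => he.trans hee')
    (he.trans hee') hp, mul_assoc, ← integral_mul_const]
  simp only [← Finset.pow_card_mul_prod, Finset.card_univ, Fintype.card_fin,
    mul_left_comm _ ((1 / 2 : ℂ) ^ (k + 1)), mul_right_comm _ (∏ _ : Fin (k + 1), _),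
    mul_assoc ((1 / 2 : ℂ) ^ (k + 1))]
  rw [integral_const_mul, hint, ← hconst]
  field_simp

lemma inv_four_mul_pi_pow_succ_mul (k : ℕ) :
    ((4 * Real.pi) ^ (k + 1) : ℂ)⁻¹ * (2 * Real.pi) = 1 / 2 * ((4 * Real.pi) ^ k : ℂ)⁻¹ := by
  have : (Real.pi : ℂ) ≠ 0 := ofReal_ne_zero.mpr Real.pi_ne_zero
  rw [pow_succ]
  field_simp
  norm_num

lemma BarnesIdentity.zero (a p : ℕ → ℂ) (σ : ℂ) (c : ℕ → ℝ) : BarnesIdentity 0 a σ p c := by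
  rw [BarnesIdentity, integral_fin_zero]
  simp [Ufun_one, PextL, sumA, sub_eq_neg_add]

lemma BarnesIdentity.succ {e' : ℝ} {σ : ℂ} {p : ℕ → ℂ} {c : ℕ → ℝ}
    (ha : ∀ j < k + 2, (a j).re = 0) (he : 0 < e) (hee' : e < e') (heσ : e < σ.re)
    (hec : ∀ i < k + 1, e < c i) (hp : ∀ j < k + 1, e' < (p j).re)
    (hcP : ∀ j < k + 1, c j < (PextL (k + 2) a p (j + 1)).re)
    (hcPσ : ∀ j < k + 1, c j < (PextL (k + 2) a p (j + 2) + σ).re)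
    (h : ∀ x : Fin k → ℝ, BarnesIdentity k (tildeA (k + 2) a) (σ + a 0 / (k + 1))
      (verticalLine (fun _ => e') x) (fun _ => e)) :
    BarnesIdentity (k + 1) a σ p c := by
  set P := PextL (k + 2) a p
  have hP (j : ℕ) (hj : j < k + 1) : p j = P (j + 1) := (PextL_succ a p hj).symm
  have hS : a 0 - sumA (k + 2) a = a 0 + P (k + 2) := by
    rw [sub_eq_add_neg, ← PextL_last a p (k + 1)]
  have hlast (t : Fin k → ℝ) : shiftedVar k a e t (k + 1) = a 0 + P (k + 2) := by
    rw [shiftedVar_last, hS]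
  have hne (t : Fin k → ℝ) : Gammaℝ (P (k + 1) + σ - shiftedVar k a e t k) ≠ 0 := by
    refine Gammaℝ_ne_zero_of_re_pos ?_
    rw [← hP k k.lt_succ_self, sub_re, add_re, shiftedVar_re e t ha]
    split_ifs <;> linarith [hp k k.lt_succ_self]
  have hleft := Ufun_mul_prod_Gammaℝ_eq_integral ha he hee' heσ hp h
  have hprod (t : Fin k → ℝ) : ∏ j : Fin k, barnesQuotient (shiftedVar k a e t (j + 1))
        (shiftedVar k a e t j - σ) (p (j + 1) + a 0) (p j) =
      ∏ j : Fin k, barnesQuotient (shiftedVar k a e t (j + 1))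
        (shiftedVar k a e t j - σ) (P (j + 2) + a 0) (P (j + 1)) :=
    Finset.prod_congr rfl fun j _ => by rw [hP j (by omega), hP (j + 1) (by omega)]
  rw [BarnesIdentity, Finset.prod_range_succ',
    integral_Ufun_mul_Gammaℝ_mul_Gammaℝ ha he hec hcP hcPσ, ← mul_assoc, hleft,
    ← mul_assoc _ (2 * (Real.pi : ℂ)), inv_four_mul_pi_pow_succ_mul, hS, hP 0 k.succ_pos,
    hP k k.lt_succ_self, ← integral_const_mul, ← integral_mul_const, ← integral_const_mul,
    ← integral_const_mul]
  congr 1 with t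
  rw [hprod]
  have htel := Gammaℝ_mul_prod_barnesQuotient k (shiftedVar_zero a e t) (hlast t) (hne t)
  rw [hlast] at htel
  linear_combination 1 / 2 * ((4 * Real.pi) ^ k : ℂ)⁻¹ *
    Ufun (k + 1) (tildeA (k + 2) a) (verticalLine (fun _ => e) t) * htel

end BarnesInduction

theorem barnesIdentity (m : ℕ) {a : ℕ → ℂ} (ha : ∀ j < m + 1, (a j).re = 0) {σ : ℂ}
    (hσ : 0 < σ.re) {p : ℕ → ℂ} (hp : ∀ j < m, 0 < (p j).re) {c : ℕ → ℝ} (hc : ∀ i < m, 0 < c i)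
    (hcP : ∀ j < m, c j < (PextL (m + 1) a p (j + 1)).re)
    (hcPσ : ∀ j < m, c j < (PextL (m + 1) a p (j + 2) + σ).re) : BarnesIdentity m a σ p c := by
  induction m generalizing a σ p c with
  | zero => exact .zero a p σ c
  | succ k ih =>
    obtain ⟨e', hp', he'⟩ := ((eventually_forall_lt (k + 1) hp).and self_mem_nhdsWithin).exists
    obtain ⟨e, hec, he, helt⟩ := ((eventually_forall_lt (k + 1) hc).and
      (Filter.eventually_mem_set.2 (Ioo_mem_nhdsGT (lt_min he' hσ)))).exists
    have hδ : (a 0 / (k + 1)).re = 0 := by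
      rw [div_natCast_add_one_re, ha 0 (by omega), zero_div]
    have hP (x : Fin k → ℝ) (i : ℕ) : (PextL (k + 1) (tildeA (k + 2) a)
        (verticalLine (fun _ => e') x) i).re = if 0 < i ∧ i ≤ k then e' else 0 := by
      have := shiftedVar_re e' x ha i
      simp only [shiftedVar, add_re, mul_re] at this
      simpa [hδ] using this
    obtain ⟨hee', heσ⟩ := lt_min_iff.1 helt
    refine .succ ha he hee' heσ hec hp' hcP hcPσ fun x => ih (tildeA_re ha) ?_ ?_ ?_ ?_ ?_
    · rwa [add_re, hδ, add_zero]
    · exact fun j _ => by rwa [verticalLine_re]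
    · exact fun _ _ => he
    · intro j hj
      rw [PextL_succ _ _ hj, verticalLine_re]
      exact hee'
    · intro j _
      rw [add_re, add_re, hδ, hP]
      split_ifs <;> linarith

lemma prod_Icc_GammaR_eq_prod_fin (m : ℕ) (P q : ℕ → ℂ) (σ : ℂ) :
    ∏ j ∈ Finset.Icc 1 m, (GammaR (P j - q (j - 1)) * GammaR (P (j + 1) - q (j - 1) + σ)) =
      ∏ j : Fin m, (Gammaℝ (P (j + 1) - q j) * Gammaℝ (P (j + 2) + σ - q j)) := by
  rw [← Finset.Ico_add_one_right_eq_Icc, Finset.prod_Ico_eq_prod_range, Nat.add_sub_cancel,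
    Finset.prod_range]
  refine Finset.prod_congr rfl fun j _ => ?_
  rw [add_comm 1 (j : ℕ), Nat.add_sub_cancel, sub_add_eq_add_sub]
  rfl

lemma inv_pow_mul_VIntK (z : ℂ) (m : ℕ) (c : ℕ → ℝ) (f : (ℕ → ℂ) → ℂ) :
    ((z * I) ^ m)⁻¹ * VIntK m c f = (z ^ m)⁻¹ * ∫ t : Fin m → ℝ, f (verticalLine c t) := by
  rw [mul_pow, mul_inv, mul_assoc, VIntK, inv_mul_cancel_left₀ (pow_ne_zero m I_ne_zero)]
  rfl

/-- Barnes-type self-reproducing identity for `U_{n,a}`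
(Proposition 1.8(2) of Ishii–Stade). -/
theorem U_barnes_identity_two (n : ℕ) (hn : 2 ≤ n) (a : ℕ → ℂ)
    (ha : ∀ j < n, (a j).re = 0) (σ : ℂ) (hσ : 0 < σ.re)
    (p : ℕ → ℂ) (hp : ∀ j < n - 1, 0 < (p j).re)
    (c : ℕ → ℝ) (hc : ∀ i < n - 1, 0 < c i)
    (hΓ : ∀ j, 1 ≤ j → j ≤ n - 1 →
      0 < (PextL n a p j - (c (j - 1) : ℂ)).re ∧
      0 < (PextL n a p (j + 1) - (c (j - 1) : ℂ) + σ).re) :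
    Ufun n a p =
      GammaR (p 0 + σ) / (∏ j ∈ Finset.range n, GammaR (σ - a j)) *
        (((4 * (Real.pi : ℂ) * Complex.I) ^ (n - 1))⁻¹ *
          VIntK (n - 1) c (fun q =>
            Ufun n a q *
              ∏ j ∈ Finset.Icc 1 (n - 1),
                GammaR (PextL n a p j - q (j - 1)) *
                  GammaR (PextL n a p (j + 1) - q (j - 1) + σ))) := by
  obtain ⟨m, rfl⟩ : ∃ m, n = m + 1 := ⟨n - 1, by omega⟩
  simp only [Nat.add_sub_cancel] at hp hc hΓ ⊢
  have hΓ' (j : ℕ) (hj : j < m) : c j < (PextL (m + 1) a p (j + 1)).re ∧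
      c j < (PextL (m + 1) a p (j + 2) + σ).re := by
    obtain ⟨h₁, h₂⟩ := hΓ (j + 1) (by omega) (by omega)
    simp only [Nat.add_sub_cancel, sub_re, add_re, ofReal_re] at h₁ h₂ ⊢
    constructor <;> linarith
  have hne : ∏ j ∈ Finset.range (m + 1), GammaR (σ - a j) ≠ 0 :=
    Finset.prod_ne_zero_iff.2 fun j hj => Gammaℝ_ne_zero_of_re_pos <| by
      rwa [sub_re, ha j (Finset.mem_range.1 hj), sub_zero]
  rw [inv_pow_mul_VIntK, div_mul_eq_mul_div, eq_div_iff hne, ← PextL_succ a p (by omega : 0 < m)]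
  simp only [prod_Icc_GammaR_eq_prod_fin]
  exact barnesIdentity m ha hσ hp hc (fun j hj => (hΓ' j hj).1) fun j hj => (hΓ' j hj).2

end
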